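/- arXiv:2209.09126 — 5 statements merged into one kernel-verified Lean document; each statement's English description precedes it below -/
import Mathlib

section
/- Suppose ‖T_i‖ < 1/2 for all 1 ≤ i ≤ m, the matrices commute (T_i T_j = T_j T_i for all 1 ≤ i, j ≤ m), and Σ_{i=1}^m |det(T_i)|^2 > 1. Then for Lebesgue-almost every a = (a_1,…,a_m) ∈ ℝ^{md}, the self-affine set K^a has non-empty interior. -/
open MeasureTheory

noncomputable section

namespace SelfAffine

variable {d m : ℕ}

/-- Euclidean operator norm of a `d × d` real matrix. -/
def opNorm (A : Matrix (Fin d) (Fin d) ℝ) : ℝ :=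
  ‖Matrix.toEuclideanCLM (𝕜 := ℝ) A‖

/-- smallest singular value of an invertible matrix, via `α_d(A) = ‖A⁻¹‖⁻¹`. -/
def alphaMin (A : Matrix (Fin d) (Fin d) ℝ) : ℝ := (opNorm A⁻¹)⁻¹

/-- `T_I = T_{i_1} ⋯ T_{i_n}` for a finite word `I ∈ Σ_n`. -/
def wordProd (T : Fin m → Matrix (Fin d) (Fin d) ℝ) {n : ℕ} (I : Fin n → Fin m) :
    Matrix (Fin d) (Fin d) ℝ :=
  (List.ofFn fun k => T (I k)).prod

/-- the coding map `π^a : Σ → ℝ^d`, `π^a(x) = ∑_{n ≥ 0} T_{x|n} a_{x_{n+1}}`. -/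
def codingMap (T : Fin m → Matrix (Fin d) (Fin d) ℝ)
    (a : Fin m → EuclideanSpace ℝ (Fin d)) (x : ℕ → Fin m) : EuclideanSpace ℝ (Fin d) :=
  ∑' n : ℕ, Matrix.toEuclideanCLM (𝕜 := ℝ) (wordProd T fun k : Fin n => x (k : ℕ)) (a (x n))

/-- the self-affine set `K^a = π^a(Σ)`. -/
def attractor (T : Fin m → Matrix (Fin d) (Fin d) ℝ)
    (a : Fin m → EuclideanSpace ℝ (Fin d)) : Set (EuclideanSpace ℝ (Fin d)) :=
  Set.range (codingMap T a)

/-!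
The idea is to find, inside the system `x ↦ T_i x + a_i`, a subsystem whose maps share one linear
part. Expanding `(∑ i, |det T_i| ^ 2) ^ n` and grouping the words of length `n` by their letter
counts gives a set `D` of rearrangements of one word with `|D| |det A| ^ 2 > 1`, where by
commutativity `A` is the linear part of every word of `D`. Let `X` be the attractor of the
homogeneous system whose translations are those of the words of `D` but whose linear part is
`A ^ 2`. Interleaving two codes shows `X + A X ⊆ K^a`, so by Steinhaus' theorem it suffices that `X`
has positive measure.

This is the second moment method. The images of the unit ball at level `k` cover a set of measure
at least a constant times `(|D| ^ 2 |det A| ^ 2) ^ k` divided by the number of overlapping pairs,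
and all these images shrink to `X`. By Fatou it is enough that the mean number of overlapping pairs
over a ball of parameters is `O((|D| ^ 2 |det A| ^ 2) ^ k)`. Two distinct words of `D` first
differ at some letters `s ≠ t`; moving `a_s` by `v` and `a_t` by `-v` separates the two branches by
`2 v` up to an error of norm at most `4 ρ ‖v‖`, where `‖T_i‖ ≤ ρ < 1 / 2`. So each pair of branches
with different first words overlaps on a set of parameters of measure `O(|det A| ^ (2 k))`, and the
pairs sharing their first word are counted recursively.
-/

open Set Filter Topology Metric
open scoped ENNReal NNReal Pointwise

section HaarMeasure

variable {E F : Type*} [NormedAddCommGroup E] [NormedSpace ℝ E] [FiniteDimensional ℝ E]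
  [MeasurableSpace E] [BorelSpace E] [NormedAddCommGroup F] [NormedSpace ℝ F]
  [FiniteDimensional ℝ F] [MeasurableSpace F] [BorelSpace F]

theorem addHaar_preimage_le_of_antilipschitzWith (μ : Measure E) [μ.IsAddHaarMeasure] {K : ℝ≥0}
    {f : E → E} (hf : AntilipschitzWith K f) (s : Set E) :
    μ (f ⁻¹' s) ≤ (K : ℝ≥0∞) ^ Module.finrank ℝ E * μ s := by
  rw [Measure.isAddLeftInvariant_eq_smul μ (Measure.hausdorffMeasure (Module.finrank ℝ E)),
    Measure.smul_apply, Measure.smul_apply, ENNReal.smul_def, ENNReal.smul_def, smul_eq_mul,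
    smul_eq_mul, mul_left_comm, ← ENNReal.rpow_natCast]
  gcongr
  exact hf.hausdorffMeasure_preimage_le (Nat.cast_nonneg _) s

theorem measure_closedBall_mul_le_of_measure_slice_le (μ : Measure E) [μ.IsAddHaarMeasure]
    (ν : Measure F) [ν.IsAddHaarMeasure] {J : E →L[ℝ] F} (hJ : ‖J‖ ≤ 1) {G : Set F} {R : ℝ}
    (hG : MeasurableSet G) (hGR : G ⊆ closedBall 0 R) {c : ℝ≥0∞}
    (hc : ∀ p, μ {v | p + J v ∈ G} ≤ c) :
    μ (closedBall 0 1) * ν G ≤ c * ν (closedBall 0 (R + 1)) := by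
  set T : Set (E × F) := {q | q.1 ∈ closedBall 0 1 ∧ q.2 + J q.1 ∈ G} with hT
  have hTm : MeasurableSet T :=
    (measurable_fst measurableSet_closedBall).inter
      ((by fun_prop : Measurable fun q : E × F => q.2 + J q.1) hG)
  calc μ (closedBall 0 1) * ν G
      = ∫⁻ v, (closedBall 0 1).indicator (fun _ => ν G) v ∂μ := by
        rw [lintegral_indicator_const measurableSet_closedBall, mul_comm]
    _ = ∫⁻ v, ν (Prod.mk v ⁻¹' T) ∂μ := by
        refine lintegral_congr fun v => ?_
        by_cases hv : v ∈ closedBall (0 : E) 1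
        · rw [indicator_of_mem hv, ← measure_preimage_add_right ν (J v) G]
          simp only [hT, hv, true_and, preimage_ofPred_eq]
          rfl
        · have hempty : Prod.mk v ⁻¹' T = ∅ := eq_empty_of_forall_notMem fun p hp => hv hp.1
          rw [indicator_of_notMem hv, hempty, measure_empty]
    _ = ∫⁻ p, μ ((fun v => (v, p)) ⁻¹' T) ∂ν := by
        rw [← Measure.prod_apply hTm, Measure.prod_apply_symm hTm]
    _ ≤ ∫⁻ p, (closedBall (0 : F) (R + 1)).indicator (fun _ => c) p ∂ν := by
        refine lintegral_mono fun p => ?_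
        by_cases hp : p ∈ closedBall (0 : F) (R + 1)
        · rw [indicator_of_mem hp]
          exact (measure_mono fun v hv => hv.2).trans (hc p)
        · have hempty : (fun v => (v, p)) ⁻¹' T = ∅ := by
            refine eq_empty_of_forall_notMem fun v hv => hp ?_
            have hv1 : ‖v‖ ≤ 1 := mem_closedBall_zero_iff.1 hv.1
            have hJv : ‖J v‖ ≤ 1 := (J.le_of_opNorm_le hJ v).trans (by rwa [one_mul])
            have hR : ‖p + J v‖ ≤ R := mem_closedBall_zero_iff.1 (hGR hv.2)
            rw [mem_closedBall_zero_iff]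
            exact (norm_le_add_norm_add p (J v)).trans (add_le_add hR hJv)
          rw [hempty, measure_empty]
          exact zero_le
    _ = c * ν (closedBall 0 (R + 1)) := lintegral_indicator_const measurableSet_closedBall c

theorem exists_measure_closedBall_inter_preimage_le (μ : Measure E) [μ.IsAddHaarMeasure]
    (ν : Measure F) [ν.IsAddHaarMeasure] (R : ℝ) (K : ℝ≥0) :
    ∃ C : ℝ≥0∞, C ≠ ∞ ∧ ∀ (Φ : F →L[ℝ] E) (J : E →L[ℝ] F), ‖J‖ ≤ 1 →
      AntilipschitzWith K (Φ ∘L J) → ∀ W : Set E, MeasurableSet W →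
        ν (closedBall 0 R ∩ Φ ⁻¹' W) ≤ C * μ W := by
  set b := μ (closedBall (0 : E) 1)
  have hb0 : b ≠ 0 := (measure_closedBall_pos μ _ one_pos).ne'
  have hbtop : b ≠ ∞ := measure_closedBall_lt_top.ne
  set B := ν (closedBall (0 : F) (R + 1))
  refine ⟨(K : ℝ≥0∞) ^ Module.finrank ℝ E * B / b, ?_, fun Φ J hJ hΦJ W hW => ?_⟩
  · exact ENNReal.div_ne_top (ENNReal.mul_ne_top (ENNReal.pow_ne_top ENNReal.coe_ne_top)
      measure_closedBall_lt_top.ne) hb0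
  have hslice (p : F) : μ {v | p + J v ∈ closedBall 0 R ∩ Φ ⁻¹' W} ≤
      (K : ℝ≥0∞) ^ Module.finrank ℝ E * μ W := by
    calc μ {v | p + J v ∈ closedBall 0 R ∩ Φ ⁻¹' W}
        ≤ μ ((Φ ∘L J) ⁻¹' ((Φ p + ·) ⁻¹' W)) := measure_mono fun v hv => by
          simpa using hv.2
      _ ≤ (K : ℝ≥0∞) ^ Module.finrank ℝ E * μ ((Φ p + ·) ⁻¹' W) :=
          addHaar_preimage_le_of_antilipschitzWith μ hΦJ _
      _ = (K : ℝ≥0∞) ^ Module.finrank ℝ E * μ W := by rw [measure_preimage_add]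
  have hmul := measure_closedBall_mul_le_of_measure_slice_le μ ν hJ
    (measurableSet_closedBall.inter (Φ.continuous.measurable hW)) inter_subset_left hslice
  rw [ENNReal.mul_div_right_comm.symm, ENNReal.le_div_iff_mul_le (.inl hb0) (.inl hbtop)]
  calc _ = b * ν (closedBall 0 R ∩ Φ ⁻¹' W) := mul_comm _ _
    _ ≤ _ := hmul
    _ = _ := by ring

theorem interior_add_nonempty_of_addHaar_ne_zero (μ : Measure E) [μ.IsAddHaarMeasure]
    {A B : Set E} (hA : MeasurableSet A) (hB : MeasurableSet B) (hA0 : μ A ≠ 0) (hB0 : μ B ≠ 0) :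
    (interior (A + B)).Nonempty := by
  set T : Set (E × E) := {q | q.2 ∈ A ∧ q.1 - q.2 ∈ B} with hT
  have hTm : MeasurableSet T :=
    (measurable_snd hA).inter ((measurable_fst.sub measurable_snd) hB)
  have hT0 : (μ.prod μ) T ≠ 0 := by
    have hpre : (fun q : E × E => (q.1 + q.2, q.2)) ⁻¹' T = B ×ˢ A := by
      ext q
      simp [hT, and_comm]
    rw [← (measurePreserving_add_prod μ μ).measure_preimage hTm.nullMeasurableSet, hpre,
      Measure.prod_prod]
    exact mul_ne_zero hB0 hA0
  obtain ⟨x, hx⟩ : ∃ x, μ (Prod.mk x ⁻¹' T) ≠ 0 := by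
    by_contra! h
    exact hT0 ((Measure.measure_prod_null hTm).2 (.of_forall h))
  have hdiff : Prod.mk x ⁻¹' T - Prod.mk x ⁻¹' T ∈ 𝓝 (x - x) := by
    rw [sub_self]
    exact Measure.sub_mem_nhds_zero_of_addHaar_pos μ _ (measurable_prodMk_left hTm)
      (pos_iff_ne_zero.2 hx)
  refine ⟨x, mem_interior_iff_mem_nhds.2 ?_⟩
  filter_upwards [(continuous_sub_right x).tendsto x hdiff] with y hy
  obtain ⟨g, hg, g', hg', hgg'⟩ := hy
  refine ⟨g, hg.1, x - g', hg'.2, ?_⟩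
  have hgg' : g - g' = y - x := hgg'
  change g + (x - g') = y
  rw [add_sub_left_comm, hgg', add_sub_cancel]

theorem addHaar_image_pow (μ : Measure E) [μ.IsAddHaarMeasure] (S : E →L[ℝ] E) (k : ℕ)
    (s : Set E) : μ ((S ^ k : E →L[ℝ] E) '' s) = ENNReal.ofReal |S.det| ^ k * μ s := by
  have hdet : LinearMap.det ((S ^ k : E →L[ℝ] E) : E →ₗ[ℝ] E) = S.det ^ k := by
    rw [← ContinuousLinearMap.toLinearMapRingHom_apply, map_pow, map_pow]
    rfl
  rw [Measure.addHaar_image_continuousLinearMap, hdet, abs_pow, ENNReal.ofReal_pow (abs_nonneg _)]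

end HaarMeasure

section SecondMoment

variable {X I : Type*} [MeasurableSpace X] [Fintype I]

theorem lintegral_sum_indicator_sq (μ : Measure X) {B : I → Set X} (hB : ∀ i, MeasurableSet (B i)) :
    ∫⁻ x, (∑ i, (B i).indicator 1 x : ℝ≥0∞) ^ 2 ∂μ = ∑ i, ∑ j, μ (B i ∩ B j) := by
  have hBB (i j) : Measurable ((B i ∩ B j).indicator (1 : X → ℝ≥0∞)) :=
    measurable_one.indicator ((hB i).inter (hB j))
  have hprod (i j) (x : X) : (B i).indicator (1 : X → ℝ≥0∞) x * (B j).indicator 1 x =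
      (B i ∩ B j).indicator 1 x := by rw [inter_indicator_one, Pi.mul_apply]
  simp_rw [pow_two, Finset.sum_mul_sum, hprod]
  rw [lintegral_finsetSum _ fun i _ => Finset.measurable_sum _ fun j _ => hBB i j]
  refine Finset.sum_congr rfl fun i _ => ?_
  rw [lintegral_finsetSum _ fun j _ => hBB i j]
  exact Finset.sum_congr rfl fun j _ => lintegral_indicator_one ((hB i).inter (hB j))

theorem sq_sum_measure_le_measure_iUnion_mul (μ : Measure X) {B : I → Set X}
    (hB : ∀ i, MeasurableSet (B i)) :
    (∑ i, μ (B i)) ^ 2 ≤ μ (⋃ i, B i) * ∑ i, ∑ j, μ (B i ∩ B j) := by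
  set f : X → ℝ≥0∞ := fun x => ∑ i, (B i).indicator 1 x with hf
  set g : X → ℝ≥0∞ := (⋃ i, B i).indicator 1 with hg
  have hfm : Measurable f := Finset.measurable_sum _ fun i _ => measurable_one.indicator (hB i)
  have hgm : Measurable g := measurable_one.indicator (MeasurableSet.iUnion hB)
  have hfg : ∫⁻ x, (f * g) x ∂μ = ∑ i, μ (B i) := by
    have hmul (x : X) : (f * g) x = f x := by
      simp only [hf, hg, Pi.mul_apply, Finset.sum_mul]
      refine Finset.sum_congr rfl fun i _ => ?_
      rw [← Pi.mul_apply, ← inter_indicator_one, inter_eq_left.2 (subset_iUnion B i)]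
    simp_rw [hmul, hf]
    rw [lintegral_finsetSum _ fun i _ => measurable_one.indicator (hB i)]
    exact Finset.sum_congr rfl fun i _ => lintegral_indicator_one (hB i)
  have hgg : ∫⁻ x, g x ^ 2 ∂μ = μ (⋃ i, B i) := by
    have hsq (x : X) : g x ^ 2 = g x := by
      rw [pow_two, hg, ← Pi.mul_apply, ← inter_indicator_one, inter_self]
    simp_rw [hsq, hg]
    exact lintegral_indicator_one (MeasurableSet.iUnion hB)
  have hCS := ENNReal.lintegral_mul_le_Lp_mul_Lq μ Real.HolderConjugate.two_two hfm.aemeasurable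
    hgm.aemeasurable
  simp_rw [ENNReal.rpow_two, hfg, hgg, hf, lintegral_sum_indicator_sq μ hB] at hCS
  calc (∑ i, μ (B i)) ^ 2 ≤ _ := pow_le_pow_left' hCS 2
    _ = μ (⋃ i, B i) * ∑ i, ∑ j, μ (B i ∩ B j) := by
      rw [mul_pow, ← ENNReal.rpow_two, ← ENNReal.rpow_two, ← ENNReal.rpow_mul, ← ENNReal.rpow_mul,
        mul_comm]
      norm_num

theorem ae_exists_frequently_le_mul {ν : Measure X} {f : ℕ → X → ℝ≥0∞} {u : ℕ → ℝ≥0∞} {M : ℝ≥0∞}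
    (hf : ∀ k, Measurable (f k)) (hu0 : ∀ k, u k ≠ 0) (hutop : ∀ k, u k ≠ ∞) (hM : M ≠ ∞)
    (hfM : ∀ k, ∫⁻ x, f k x ∂ν ≤ M * u k) :
    ∀ᵐ x ∂ν, ∃ c ≠ ∞, ∃ᶠ k in atTop, f k x ≤ c * u k := by
  have hdiv (k : ℕ) : Measurable fun x => f k x / u k := (hf k).div_const _
  have hbound (k : ℕ) : ∫⁻ x, f k x / u k ∂ν ≤ M := by
    simp_rw [div_eq_mul_inv]
    rw [lintegral_mul_const _ (hf k), ← div_eq_mul_inv]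
    exact ENNReal.div_le_of_le_mul (hfM k)
  have hfatou : ∫⁻ x, liminf (fun k => f k x / u k) atTop ∂ν ≠ ∞ :=
    ne_top_of_le_ne_top hM ((lintegral_liminf_le hdiv).trans
      (liminf_le_of_frequently_le' (Frequently.of_forall hbound)))
  filter_upwards [ae_lt_top (Measurable.liminf hdiv) hfatou] with x hx
  obtain ⟨c, hxc, hc⟩ := exists_between hx
  refine ⟨c, hc.ne, (frequently_lt_of_liminf_lt (by isBoundedDefault) hxc).mono fun k hk => ?_⟩
  exact (ENNReal.div_le_iff_le_mul (.inl (hu0 k)) (.inl (hutop k))).1 hk.le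

end SecondMoment

theorem exists_le_mul_pow_of_succ_le {G : ℕ → ℝ≥0∞} {N x c : ℝ≥0∞} (hNx : N < x) (hx : x ≠ ∞)
    (hc : c ≠ ∞) (hG0 : G 0 ≠ ∞) (hG : ∀ k, G (k + 1) ≤ N * G k + c * x ^ (k + 1)) :
    ∃ M : ℝ≥0∞, M ≠ ∞ ∧ ∀ k, G k ≤ M * x ^ k := by
  obtain ⟨ε, hε⟩ : ∃ ε, x = N + ε := ⟨x - N, (add_tsub_cancel_of_le hNx.le).symm⟩
  have hε0 : ε ≠ 0 := by rintro rfl; simp [hε] at hNx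
  have hεtop : ε ≠ ∞ := by rintro rfl; simp [hε] at hx
  set M := G 0 + c * x / ε with hM
  have hstep : N * M + c * x ≤ M * x :=
    calc N * M + c * x = N * M + ε * (c * x / ε) := by rw [ENNReal.mul_div_cancel hε0 hεtop]
      _ ≤ N * M + ε * M := by gcongr; exact le_add_self
      _ = M * x := by rw [hε]; ring
  refine ⟨M, ENNReal.add_ne_top.2
    ⟨hG0, ENNReal.div_ne_top (ENNReal.mul_ne_top hc hx) hε0⟩, fun k => ?_⟩
  induction k with
  | zero => simp [hM]
  | succ k ih =>
    calc G (k + 1) ≤ N * G k + c * x ^ (k + 1) := hG k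
      _ ≤ N * (M * x ^ k) + c * x ^ (k + 1) := by gcongr
      _ = (N * M + c * x) * x ^ k := by ring
      _ ≤ M * x * x ^ k := by gcongr
      _ = M * x ^ (k + 1) := by ring

section Words

variable {ι : Type*}

theorem exists_eq_append_cons_of_ne {w w' : List ι} (hlen : w.length = w'.length) (hne : w ≠ w') :
    ∃ u s r t r', s ≠ t ∧ w = u ++ s :: r ∧ w' = u ++ t :: r' := by
  induction w generalizing w' with
  | nil => exact absurd (List.length_eq_zero_iff.1 hlen.symm).symm hne
  | cons s r ih =>
    obtain _ | ⟨t, r'⟩ := w'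
    · simp at hlen
    by_cases hst : s = t
    · subst hst
      obtain ⟨u, s', q, t', q', hst', rfl, rfl⟩ := ih (by simpa using hlen) (by simpa using hne)
      exact ⟨s :: u, s', q, t', q', hst', rfl, rfl⟩
    · exact ⟨[], s, r, t, r', hst, rfl, rfl⟩

theorem exists_add_one_pow_lt_pow (k : ℕ) {x : ℝ} (hx : 1 < x) :
    ∃ n : ℕ, n ≠ 0 ∧ ((n : ℝ) + 1) ^ k < x ^ n := by
  have hx0 : 0 < x := one_pos.trans hx
  have hlim := (tendsto_add_atTop_iff_nat 1).2 (tendsto_pow_const_div_const_pow_of_one_lt k hx)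
  obtain ⟨n, hn, hn0⟩ := ((hlim.eventually (gt_mem_nhds (inv_pos.2 hx0))).and
    (eventually_ne_atTop 0)).exists
  refine ⟨n, hn0, ?_⟩
  rwa [div_lt_iff₀ (by positivity), pow_succ', inv_mul_cancel_left₀ hx0.ne', Nat.cast_succ] at hn

theorem exists_perm_one_lt_card_mul_prod [Fintype ι] (p : ι → ℝ) (hp : 1 < ∑ i, p i) :
    ∃ (w : List ι) (D : Finset (List ι)),
      w ≠ [] ∧ (∀ v ∈ D, v.Perm w) ∧ 1 < (D.card : ℝ) * (w.map p).prod := by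
  classical
  obtain ⟨n, hn0, hn⟩ := exists_add_one_pow_lt_pow (Fintype.card ι) hp
  let letterCount (v : Fin n → ι) (i : ι) : Fin (n + 1) :=
    ⟨(List.ofFn v).count i, Nat.lt_succ_of_le (List.count_le_length.trans_eq List.length_ofFn)⟩
  have hsum : (Finset.univ : Finset (ι → Fin (n + 1))).card • (1 : ℝ) <
      ∑ v : Fin n → ι, ((List.ofFn v).map p).prod := by
    calc _ = ((n : ℝ) + 1) ^ Fintype.card ι := by simp
      _ < (∑ i, p i) ^ n := hn
      _ = _ := by simp [Fintype.sum_pow, List.map_ofFn, List.prod_ofFn]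
  obtain ⟨c, -, hc⟩ := Finset.exists_lt_sum_fiber_of_maps_to_of_nsmul_lt_sum
    (fun v _ => Finset.mem_univ (letterCount v)) hsum
  set fibre := Finset.univ.filter (letterCount · = c)
  obtain ⟨v₀, hv₀⟩ : fibre.Nonempty := by
    by_contra! hempty
    simp [hempty, zero_lt_one.not_gt] at hc
  have hperm : ∀ v ∈ fibre, (List.ofFn v).Perm (List.ofFn v₀) := fun v hv => by
    have hcount : letterCount v = letterCount v₀ :=
      (Finset.mem_filter.1 hv).2.trans (Finset.mem_filter.1 hv₀).2.symm
    exact List.perm_iff_count.2 fun i => congrArg Fin.val (congrFun hcount i)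
  refine ⟨List.ofFn v₀, fibre.image List.ofFn, by simpa using hn0, ?_, ?_⟩
  · simpa only [Finset.forall_mem_image] using hperm
  · rw [Finset.card_image_of_injective _ List.ofFn_injective, ← nsmul_eq_mul, ← Finset.sum_const]
    rwa [Finset.sum_congr rfl fun v hv => ((hperm v hv).map p).prod_eq] at hc

end Words

theorem exists_nnreal_lt_forall_norm_le {ι E : Type*} [Finite ι] [SeminormedAddCommGroup E]
    {f : ι → E} {c : ℝ} (hc : 0 < c) (hf : ∀ i, ‖f i‖ < c) :
    ∃ ρ : ℝ≥0, ρ < c ∧ ∀ i, ‖f i‖ ≤ ρ := by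
  cases nonempty_fintype ι
  lift c to ℝ≥0 using hc.le
  refine ⟨Finset.univ.sup (‖f ·‖₊), NNReal.coe_lt_coe.2 ?_, fun i => ?_⟩
  · exact (Finset.sup_lt_iff (by exact_mod_cast hc)).2 fun i _ => by exact_mod_cast hf i
  · exact NNReal.coe_le_coe.2 (Finset.le_sup (f := (‖f ·‖₊)) (Finset.mem_univ i))

theorem det_mul {R M : Type*} [CommRing R] [AddCommGroup M] [Module R M] [TopologicalSpace M]
    (f g : M →L[R] M) : (f * g).det = f.det * g.det :=
  map_mul LinearMap.det (f : M →ₗ[R] M) g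

section AffineSystem

variable {ι E F : Type*} [NormedAddCommGroup E] [NormedSpace ℝ E] [NormedAddCommGroup F]
  [NormedSpace ℝ F]

/-- The linear part `L i₁ ∘ ⋯ ∘ L iₙ` of a composition of affine maps coded by the word `i₁ ⋯ iₙ`;
for matrices it is the paper's `T_I`. -/
def linearPart (L : ι → E →L[ℝ] E) (w : List ι) : E →L[ℝ] E :=
  (w.map L).prod

/-- The translation part of the composition, along a word, of the affine maps `x ↦ τ i p + L i x`.
The parameter `p` enters linearly, so the translation part is encoded as a linear map in `p`. -/
def translationPart (L : ι → E →L[ℝ] E) (τ : ι → F →L[ℝ] E) : List ι → F →L[ℝ] E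
  | [] => 0
  | i :: w => τ i + L i ∘L translationPart L τ w

/-- The point with address `x` of the affine iterated function system `v ↦ a i + L i v`, that is,
the paper's coding map. -/
def codingSum (L : ι → E →L[ℝ] E) (a : ι → E) (x : ℕ → ι) : E :=
  ∑' n : ℕ, linearPart L (List.ofFn fun k : Fin n => x k) (a (x n))

theorem linearPart_cons (L : ι → E →L[ℝ] E) (i : ι) (w : List ι) :
    linearPart L (i :: w) = L i * linearPart L w :=
  List.prod_cons

theorem linearPart_append (L : ι → E →L[ℝ] E) (u w : List ι) :
    linearPart L (u ++ w) = linearPart L u * linearPart L w := by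
  simp only [linearPart, List.map_append, List.prod_append]

theorem linearPart_const (S : E →L[ℝ] E) (w : List ι) :
    linearPart (fun _ => S) w = S ^ w.length := by
  simp only [linearPart, List.map_const', List.prod_replicate]

theorem linearPart_eq_of_perm {L : ι → E →L[ℝ] E} (hcomm : ∀ i j, Commute (L i) (L j))
    {w w' : List ι} (h : w.Perm w') : linearPart L w = linearPart L w' :=
  (h.map L).prod_eq' (List.pairwise_map.2 (List.pairwise_of_forall hcomm))

theorem abs_det_linearPart_mul_self (L : ι → E →L[ℝ] E) (w : List ι) :
    |(linearPart L w * linearPart L w).det| = (w.map fun i => |(L i).det| ^ 2).prod := by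
  induction w with
  | nil => simp [linearPart, ContinuousLinearMap.det]
  | cons i w ih =>
    simp only [linearPart_cons, det_mul, List.map_cons, List.prod_cons, ← ih, abs_mul]
    ring

theorem norm_linearPart_le {L : ι → E →L[ℝ] E} {ρ : ℝ≥0} (hL : ∀ i, ‖L i‖ ≤ ρ) (w : List ι) :
    ‖linearPart L w‖ ≤ (ρ : ℝ) ^ w.length := by
  induction w with
  | nil => exact ContinuousLinearMap.norm_id_le
  | cons i w ih =>
    rw [linearPart_cons, List.length_cons, pow_succ']
    exact norm_mul_le_of_le (hL i) ih

theorem translationPart_append (L : ι → E →L[ℝ] E) (τ : ι → F →L[ℝ] E) (u w : List ι) (p : F) :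
    translationPart L τ (u ++ w) p =
      translationPart L τ u p + linearPart L u (translationPart L τ w p) := by
  induction u with
  | nil => simp [translationPart, linearPart]
  | cons i u ih => simp [translationPart, linearPart_cons, ih, add_assoc]

theorem translationPart_add_linearPart_mem {L : ι → E →L[ℝ] E} {τ : ι → F →L[ℝ] E} {p : F}
    {K : Set E} (hK : ∀ i, MapsTo (fun x => τ i p + L i x) K K) {x : E} (hx : x ∈ K)
    (w : List ι) : translationPart L τ w p + linearPart L w x ∈ K := by
  induction w with
  | nil => simpa [translationPart, linearPart] using hx
  | cons i w ih => simpa [translationPart, linearPart_cons, add_assoc] using hK i ih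

theorem mapsTo_closedBall_zero {A : E →L[ℝ] E} {a : E} {ρ r R : ℝ} (hA : ‖A‖ ≤ ρ) (ha : ‖a‖ ≤ r)
    (hR : r + ρ * R ≤ R) : MapsTo (fun x => a + A x) (closedBall 0 R) (closedBall 0 R) := by
  intro x hx
  rw [mem_closedBall_zero_iff] at hx ⊢
  exact (norm_add_le_of_le ha (A.le_of_opNorm_le_of_le hA hx)).trans hR

theorem linearPart_ofFn_succ (L : ι → E →L[ℝ] E) (x : ℕ → ι) (n : ℕ) :
    linearPart L (List.ofFn fun k : Fin (n + 1) => x k) =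
      L (x 0) * linearPart L (List.ofFn fun k : Fin n => x (k + 1)) := by
  simp [List.ofFn_succ, linearPart_cons]

section FiniteAlphabet

variable [Finite ι] {L : ι → E →L[ℝ] E} (hL : ∀ i, ‖L i‖ < 1)

include hL

theorem exists_summable_norm_codingSum_le (a : ι → E) :
    ∃ u : ℕ → ℝ, Summable u ∧
      ∀ n (x : ℕ → ι), ‖linearPart L (List.ofFn fun k : Fin n => x k) (a (x n))‖ ≤ u n := by
  obtain ⟨ρ, hρ, hLρ⟩ := exists_nnreal_lt_forall_norm_le one_pos hL
  obtain ⟨C, hC⟩ := (Set.finite_range fun i => ‖a i‖).bddAbove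
  have hgeom : Summable fun n => (ρ : ℝ) ^ n * C :=
    (summable_geometric_of_lt_one ρ.2 hρ).mul_right C
  refine ⟨_, hgeom, fun n x => ?_⟩
  refine ContinuousLinearMap.le_of_opNorm_le_of_le _ ?_ (hC ⟨x n, rfl⟩)
  simpa only [List.length_ofFn] using norm_linearPart_le hLρ (List.ofFn fun k : Fin n => x k)

variable [CompleteSpace E]

theorem codingSum_eq_add (a : ι → E) (x : ℕ → ι) :
    codingSum L a x = a (x 0) + L (x 0) (codingSum L a fun n => x (n + 1)) := by
  obtain ⟨u, hu, hle⟩ := exists_summable_norm_codingSum_le hL a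
  have hsum (y : ℕ → ι) := Summable.of_norm_bounded hu fun n => hle n y
  rw [codingSum, (hsum x).tsum_eq_zero_add, codingSum, (L (x 0)).map_tsum (hsum fun n => x (n + 1))]
  simp only [linearPart_ofFn_succ]
  simp [linearPart]

theorem mapsTo_range_codingSum (a : ι → E) (i : ι) :
    MapsTo (fun v => a i + L i v) (range (codingSum L a)) (range (codingSum L a)) := by
  rintro _ ⟨x, rfl⟩
  exact ⟨fun n => Nat.casesOn n i x, codingSum_eq_add hL a _⟩

theorem isCompact_range_codingSum (a : ι → E) : IsCompact (range (codingSum L a)) := by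
  let _ : TopologicalSpace ι := ⊥
  have : DiscreteTopology ι := ⟨rfl⟩
  obtain ⟨u, hu, hle⟩ := exists_summable_norm_codingSum_le hL a
  refine isCompact_range (continuous_tsum (fun n => ?_) hu hle)
  let term (y : Fin (n + 1) → ι) : E :=
    linearPart L (List.ofFn fun k : Fin n => y k.castSucc) (a (y (Fin.last n)))
  have hprefix : Continuous fun (x : ℕ → ι) (k : Fin (n + 1)) => x k := by fun_prop
  exact (continuous_of_discreteTopology (f := term)).comp hprefix

theorem range_codingSum_subset {a : ι → E} {K : Set E} (hK : IsClosed K) (hne : K.Nonempty)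
    (hmaps : ∀ i, MapsTo (fun v => a i + L i v) K K) : range (codingSum L a) ⊆ K := by
  rintro _ ⟨x, rfl⟩
  obtain ⟨v, hv⟩ := hne
  have hmem (n : ℕ) (x : ℕ → ι) :
      ∑ k ∈ Finset.range n, linearPart L (List.ofFn fun l : Fin k => x l) (a (x k)) +
        linearPart L (List.ofFn fun l : Fin n => x l) v ∈ K := by
    induction n generalizing x with
    | zero => simpa [linearPart] using hv
    | succ n ih =>
      rw [Finset.sum_range_succ']
      simp only [linearPart_ofFn_succ]
      have := hmaps (x 0) (ih fun n => x (n + 1))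
      simpa [linearPart, add_assoc, add_comm, add_left_comm] using this
  obtain ⟨u, hu, hle⟩ := exists_summable_norm_codingSum_le hL a
  obtain ⟨u', hu', hle'⟩ := exists_summable_norm_codingSum_le hL fun _ => v
  have hrest : Tendsto (fun n => linearPart L (List.ofFn fun l : Fin n => x l) v) atTop (𝓝 0) :=
    squeeze_zero_norm (fun n => hle' n x) hu'.tendsto_atTop_zero
  have hlim := (Summable.of_norm_bounded hu fun n => hle n x).hasSum.tendsto_sum_nat.add hrest
  rw [add_zero] at hlim
  exact hK.mem_of_tendsto hlim (.of_forall fun n => hmem n x)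

end FiniteAlphabet

end AffineSystem

section Interleaving

variable {D E : Type*} [NormedAddCommGroup E] [NormedSpace ℝ E]

theorem norm_mul_self_lt_one {A : E →L[ℝ] E} (hA : ‖A‖ < 1) : ‖A * A‖ < 1 :=
  (norm_mul_le A A).trans_lt (mul_lt_one_of_nonneg_of_lt_one_left (norm_nonneg A) hA hA.le)

theorem codingSum_const_eq_tsum (S : E →L[ℝ] E) (t : D → E) (ω : ℕ → D) :
    codingSum (fun _ => S) t ω = ∑' n, (S ^ n : E →L[ℝ] E) (t (ω n)) := by
  simp only [codingSum, linearPart_const, List.length_ofFn]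

variable [Finite D] [CompleteSpace E] {A : E →L[ℝ] E}

theorem codingSum_prodMk (hA : ‖A‖ < 1) (t : D → E) (ω ω' : ℕ → D) :
    codingSum (fun _ => A * A) (fun q : D × D => t q.1 + A (t q.2)) (fun n => (ω n, ω' n)) =
      codingSum (fun _ => A * A) t ω + A (codingSum (fun _ => A * A) t ω') := by
  have hAA := norm_mul_self_lt_one hA
  obtain ⟨u, hu, hle⟩ := exists_summable_norm_codingSum_le (fun _ : D => hAA) t
  have hsum (ω : ℕ → D) : Summable fun n => ((A * A) ^ n : E →L[ℝ] E) (t (ω n)) :=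
    .of_norm_bounded hu fun n => by simpa [linearPart_const] using hle n ω
  have hcomm (n : ℕ) (v : E) :
      ((A * A) ^ n : E →L[ℝ] E) (A v) = A (((A * A) ^ n : E →L[ℝ] E) v) :=
    DFunLike.congr_fun (((Commute.refl A).mul_left (Commute.refl A)).pow_left n).eq v
  simp only [codingSum_const_eq_tsum, map_add, hcomm]
  rw [A.map_tsum (hsum ω'), (hsum ω).tsum_add ((hsum ω').mapL A)]

theorem range_codingSum_add_image_subset (hA : ‖A‖ < 1) {t : D → E} {K : Set E} (hK : IsClosed K)
    (hne : K.Nonempty) (hmaps : ∀ d, MapsTo (fun v => t d + A v) K K) :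
    range (codingSum (fun _ => A * A) t) + A '' range (codingSum (fun _ => A * A) t) ⊆ K := by
  have hAA := norm_mul_self_lt_one hA
  rintro _ ⟨_, ⟨ω, rfl⟩, _, ⟨_, ⟨ω', rfl⟩, rfl⟩, rfl⟩
  refine range_codingSum_subset (fun _ => hAA) (a := fun q : D × D => t q.1 + A (t q.2)) hK hne
    (fun q v hv => ?_) ⟨_, codingSum_prodMk hA t ω ω'⟩
  simpa [add_assoc] using hmaps q.1 (hmaps q.2 hv)

end Interleaving

section HomogeneousSystem

variable {D E F : Type*} [NormedAddCommGroup E] [NormedSpace ℝ E] [NormedAddCommGroup F]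
  [NormedSpace ℝ F]

/-- The translation part, as a linear function of the parameter, of the level-`k` map coded by `i`
in the homogeneous system `x ↦ τ d p + S x`. -/
def levelTranslation (S : E →L[ℝ] E) (τ : D → F →L[ℝ] E) {k : ℕ} (i : Fin k → D) : F →L[ℝ] E :=
  translationPart (fun _ => S) τ (List.ofFn i)

/-- Transversality of the homogeneous system `x ↦ τ d p + S x`: translation parts of words with
different first letters separate, at a rate independent of the words, along some direction in the
parameter space. -/
def IsTransverse (S : E →L[ℝ] E) (τ : D → F →L[ℝ] E) : Prop :=
  ∃ K : ℝ≥0, ∀ d d', d ≠ d' → ∀ w w' : List D, ∃ J : E →L[ℝ] F, ‖J‖ ≤ 1 ∧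
    AntilipschitzWith K ((translationPart (fun _ => S) τ (d :: w) -
      translationPart (fun _ => S) τ (d' :: w')) ∘L J)

/-- The image of the closed unit ball under the level-`k` map coded by `i`. -/
def levelImage (S : E →L[ℝ] E) (τ : D → F →L[ℝ] E) {k : ℕ} (i : Fin k → D) (p : F) : Set E :=
  levelTranslation S τ i p +ᵥ (S ^ k : E →L[ℝ] E) '' closedBall 0 1

/-- The parameters for which the level images coded by `i` and `j` meet. -/
def overlapSet (S : E →L[ℝ] E) (τ : D → F →L[ℝ] E) {k : ℕ} (i j : Fin k → D) : Set F :=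
  (levelTranslation S τ i - levelTranslation S τ j) ⁻¹' ((S ^ k : E →L[ℝ] E) '' closedBall 0 2)

/-- The number of pairs of level-`k` words whose level images meet at the parameter `p`. -/
def overlapCount [Fintype D] (S : E →L[ℝ] E) (τ : D → F →L[ℝ] E) (k : ℕ) (p : F) : ℝ≥0∞ :=
  ∑ i : Fin k → D, ∑ j : Fin k → D, (overlapSet S τ i j).indicator 1 p

theorem levelTranslation_cons (S : E →L[ℝ] E) (τ : D → F →L[ℝ] E) {k : ℕ} (d : D) (w : Fin k → D) :
    levelTranslation S τ (Fin.cons d w : Fin (k + 1) → D) =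
      τ d + S ∘L levelTranslation S τ w := by
  simp [levelTranslation, translationPart]

theorem overlapSet_cons_same_subset {S : E →L[ℝ] E} (hS : Function.Injective S)
    (τ : D → F →L[ℝ] E) {k : ℕ} (d : D) (w w' : Fin k → D) :
    overlapSet S τ (Fin.cons d w : Fin (k + 1) → D) (Fin.cons d w' : Fin (k + 1) → D) ⊆
      overlapSet S τ w w' := by
  rintro p ⟨v, hv, hvp⟩
  refine ⟨v, hv, hS ?_⟩
  simpa [levelTranslation_cons, pow_succ'] using hvp

theorem mem_overlapSet_of_levelImage_inter_nonempty {S : E →L[ℝ] E} {τ : D → F →L[ℝ] E} {k : ℕ}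
    {i j : Fin k → D} {p : F} (h : (levelImage S τ i p ∩ levelImage S τ j p).Nonempty) :
    p ∈ overlapSet S τ i j := by
  obtain ⟨_, ⟨_, ⟨x, hx, rfl⟩, rfl⟩, ⟨_, ⟨y, hy, rfl⟩, hxy⟩⟩ := h
  rw [mem_closedBall_zero_iff] at hx hy
  refine ⟨y - x, mem_closedBall_zero_iff.2 ?_, ?_⟩
  · exact (norm_sub_le y x).trans (by linarith)
  · rw [map_sub, sub_apply, sub_eq_sub_iff_add_eq_add, add_comm]
    exact hxy

theorem levelImage_subset_cthickening_range_codingSum [CompleteSpace E] [Finite D]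
    {S : E →L[ℝ] E} (hS : ‖S‖ < 1) (τ : D → F →L[ℝ] E) {k : ℕ} (i : Fin k → D) (p : F) {y : E}
    (hy : y ∈ range (codingSum (fun _ => S) fun d => τ d p)) :
    levelImage S τ i p ⊆ cthickening (‖S‖ ^ k * (1 + ‖y‖))
      (range (codingSum (fun _ => S) fun d => τ d p)) := by
  rintro _ ⟨_, ⟨x, hx, rfl⟩, rfl⟩
  have hmem := translationPart_add_linearPart_mem
    (mapsTo_range_codingSum (fun _ : D => hS) fun d => τ d p) hy (List.ofFn i)
  have hnorm := norm_linearPart_le (L := fun _ : D => S) (ρ := ‖S‖₊) (fun _ => le_rfl) (List.ofFn i)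
  rw [linearPart_const, List.length_ofFn] at hmem hnorm
  refine mem_cthickening_of_dist_le _ _ _ _ hmem ?_
  change dist (levelTranslation S τ i p + _) (levelTranslation S τ i p + _) ≤ _
  rw [dist_add_left, dist_eq_norm, ← map_sub]
  refine ContinuousLinearMap.le_of_opNorm_le_of_le _ hnorm ?_
  exact (norm_sub_le x y).trans (by gcongr; exact mem_closedBall_zero_iff.1 hx)

variable [FiniteDimensional ℝ E]

theorem isCompact_pow_image_closedBall (S : E →L[ℝ] E) (k : ℕ) (r : ℝ) :
    IsCompact ((S ^ k : E →L[ℝ] E) '' closedBall 0 r) :=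
  haveI := FiniteDimensional.proper_real E
  (isCompact_closedBall 0 r).image (S ^ k).continuous

theorem isClosed_overlapSet (S : E →L[ℝ] E) (τ : D → F →L[ℝ] E) {k : ℕ} (i j : Fin k → D) :
    IsClosed (overlapSet S τ i j) :=
  (isCompact_pow_image_closedBall S k 2).isClosed.preimage (ContinuousLinearMap.continuous _)

theorem isCompact_levelImage (S : E →L[ℝ] E) (τ : D → F →L[ℝ] E) {k : ℕ} (i : Fin k → D) (p : F) :
    IsCompact (levelImage S τ i p) :=
  (isCompact_pow_image_closedBall S k 1).vadd _

section OverlapIntegral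

variable [MeasurableSpace F] [BorelSpace F] [Fintype D]

theorem measurable_overlapCount (S : E →L[ℝ] E) (τ : D → F →L[ℝ] E) (k : ℕ) :
    Measurable (overlapCount S τ k) :=
  Finset.measurable_sum _ fun i _ => Finset.measurable_sum _ fun j _ =>
    measurable_one.indicator (isClosed_overlapSet S τ i j).measurableSet

theorem lintegral_overlapCount (S : E →L[ℝ] E) (τ : D → F →L[ℝ] E) (ν : Measure F)
    (R : ℝ) (k : ℕ) : ∫⁻ p in closedBall 0 R, overlapCount S τ k p ∂ν =
      ∑ i : Fin k → D, ∑ j : Fin k → D, ν (closedBall 0 R ∩ overlapSet S τ i j) := by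
  have hmeas (i j : Fin k → D) := (isClosed_overlapSet S τ i j).measurableSet
  have hind (i j : Fin k → D) := (measurable_one (α := ℝ≥0∞)).indicator (hmeas i j)
  simp only [overlapCount]
  rw [lintegral_finsetSum _ fun i _ => Finset.measurable_sum _ fun j _ => hind i j]
  refine Finset.sum_congr rfl fun i _ => ?_
  rw [lintegral_finsetSum _ fun j _ => hind i j]
  refine Finset.sum_congr rfl fun j _ => ?_
  rw [lintegral_indicator_one (hmeas i j), Measure.restrict_apply (hmeas i j), inter_comm]

theorem lintegral_overlapCount_succ_le {S : E →L[ℝ] E} (hS : Function.Injective S)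
    (τ : D → F →L[ℝ] E) (ν : Measure F) (R : ℝ) (k : ℕ) {c : ℝ≥0∞}
    (hc : ∀ (d d' : D) (w w' : Fin k → D), d ≠ d' → ν (closedBall 0 R ∩
      overlapSet S τ (Fin.cons d w : Fin (k + 1) → D) (Fin.cons d' w' : Fin (k + 1) → D)) ≤ c) :
    ∫⁻ p in closedBall 0 R, overlapCount S τ (k + 1) p ∂ν ≤
      Fintype.card D * ∫⁻ p in closedBall 0 R, overlapCount S τ k p ∂ν +
        ((Fintype.card D : ℝ≥0∞) ^ (k + 1)) ^ 2 * c := by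
  classical
  have hpair (d d' : D) (w w' : Fin k → D) : ν (closedBall 0 R ∩
      overlapSet S τ (Fin.cons d w : Fin (k + 1) → D) (Fin.cons d' w' : Fin (k + 1) → D)) ≤
      (if d = d' then ν (closedBall 0 R ∩ overlapSet S τ w w') else 0) + c := by
    by_cases hdd' : d = d'
    · subst hdd'
      rw [if_pos rfl]
      exact le_add_right (measure_mono (inter_subset_inter_right _
        (overlapSet_cons_same_subset hS τ d w w')))
    · rw [if_neg hdd', zero_add]
      exact hc d d' w w' hdd'
  have hsplit (f : (Fin (k + 1) → D) → ℝ≥0∞) :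
      ∑ i, f i = ∑ d : D, ∑ w : Fin k → D, f (Fin.cons d w) := by
    rw [← (Fin.consEquiv fun _ : Fin (k + 1) => D).sum_comp, Fintype.sum_prod_type]
    rfl
  simp only [lintegral_overlapCount, hsplit]
  calc _ ≤ ∑ d : D, ∑ w : Fin k → D, ∑ d' : D, ∑ w' : Fin k → D,
        ((if d = d' then ν (closedBall 0 R ∩ overlapSet S τ w w') else 0) + c) := by
        gcongr; exact hpair _ _ _ _
    _ = _ := by
      simp only [Finset.sum_add_distrib, Finset.sum_ite_irrel, Finset.sum_const_zero,
        Finset.sum_ite_eq, Finset.mem_univ, if_true, Finset.sum_const, Finset.card_univ,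
        Fintype.card_fun, Fintype.card_fin, nsmul_eq_mul]
      push_cast
      ring

end OverlapIntegral

variable [MeasurableSpace E] [BorelSpace E] (μ : Measure E) [μ.IsAddHaarMeasure]

theorem addHaar_levelImage (S : E →L[ℝ] E) (τ : D → F →L[ℝ] E) {k : ℕ} (i : Fin k → D) (p : F) :
    μ (levelImage S τ i p) = ENNReal.ofReal |S.det| ^ k * μ (closedBall 0 1) := by
  rw [levelImage, measure_vadd, addHaar_image_pow]

theorem pow_mul_measure_closedBall_le [Fintype D] {S : E →L[ℝ] E} (hS : S.det ≠ 0)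
    (τ : D → F →L[ℝ] E) (k : ℕ) (p : F) :
    ((Fintype.card D : ℝ≥0∞) ^ 2 * ENNReal.ofReal |S.det|) ^ k * μ (closedBall 0 1) ≤
      μ (⋃ i : Fin k → D, levelImage S τ i p) * overlapCount S τ k p := by
  have := FiniteDimensional.proper_real E
  set N := (Fintype.card D : ℝ≥0∞)
  set s := ENNReal.ofReal |S.det|
  set b := μ (closedBall (0 : E) 1)
  have hsb0 : s ^ k * b ≠ 0 := mul_ne_zero (pow_ne_zero k (by simpa [s] using hS))
    (measure_closedBall_pos μ _ one_pos).ne'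
  have hsbtop : s ^ k * b ≠ ∞ := ENNReal.mul_ne_top (ENNReal.pow_ne_top ENNReal.ofReal_ne_top)
    measure_closedBall_lt_top.ne
  have hinter (i j : Fin k → D) : μ (levelImage S τ i p ∩ levelImage S τ j p) ≤
      s ^ k * b * (overlapSet S τ i j).indicator 1 p := by
    rcases (levelImage S τ i p ∩ levelImage S τ j p).eq_empty_or_nonempty with h | h
    · simp [h]
    · rw [indicator_of_mem (mem_overlapSet_of_levelImage_inter_nonempty h), Pi.one_apply, mul_one,
        ← addHaar_levelImage μ S τ i p]
      exact measure_mono inter_subset_left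
  have hsum : ∑ i : Fin k → D, μ (levelImage S τ i p) = N ^ k * (s ^ k * b) := by
    simp [addHaar_levelImage, N, s, b]
  refine (ENNReal.mul_le_mul_iff_right hsb0 hsbtop).1 ?_
  calc s ^ k * b * ((N ^ 2 * s) ^ k * b) = (N ^ k * (s ^ k * b)) ^ 2 := by ring
    _ ≤ μ (⋃ i : Fin k → D, levelImage S τ i p) *
        ∑ i : Fin k → D, ∑ j : Fin k → D, μ (levelImage S τ i p ∩ levelImage S τ j p) := by
      rw [← hsum]
      exact sq_sum_measure_le_measure_iUnion_mul μ fun i =>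
        (isCompact_levelImage S τ i p).measurableSet
    _ ≤ μ (⋃ i : Fin k → D, levelImage S τ i p) * (s ^ k * b * overlapCount S τ k p) := by
      simp only [overlapCount, Finset.mul_sum]
      gcongr
      exact hinter _ _
    _ = _ := by ring

theorem tendsto_measure_iUnion_levelImage [Finite D] [Nonempty D] {S : E →L[ℝ] E}
    (hS : ‖S‖ < 1) (τ : D → F →L[ℝ] E) (p : F)
    (hμ : μ (range (codingSum (fun _ => S) fun d => τ d p)) = 0) :
    Tendsto (fun k => μ (⋃ i : Fin k → D, levelImage S τ i p)) atTop (𝓝 0) := by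
  have := FiniteDimensional.proper_real E
  set K := range (codingSum (fun _ => S) fun d => τ d p)
  obtain ⟨y, hy⟩ : K.Nonempty := range_nonempty _
  have hr : Tendsto (fun k => ‖S‖ ^ k * (1 + ‖y‖)) atTop (𝓝 0) := by
    simpa using (tendsto_pow_atTop_nhds_zero_of_lt_one (norm_nonneg S) hS).mul_const (1 + ‖y‖)
  have hthick := tendsto_measure_cthickening_of_isCompact (μ := μ)
    (isCompact_range_codingSum (fun _ : D => hS) fun d => τ d p)
  rw [hμ] at hthick
  exact tendsto_of_tendsto_of_tendsto_of_le_of_le tendsto_const_nhds (hthick.comp hr)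
    (fun _ => zero_le) fun k => measure_mono (iUnion_subset fun i =>
      levelImage_subset_cthickening_range_codingSum hS τ i p hy)

theorem measure_range_codingSum_ne_zero_of_frequently [Fintype D] {S : E →L[ℝ] E}
    (hS : ‖S‖ < 1) (hdet : 1 < Fintype.card D * ENNReal.ofReal |S.det|) {τ : D → F →L[ℝ] E}
    {p : F} {c : ℝ≥0∞} (hc : c ≠ ∞)
    (hfreq : ∃ᶠ k in atTop, overlapCount S τ k p ≤
      c * ((Fintype.card D : ℝ≥0∞) ^ 2 * ENNReal.ofReal |S.det|) ^ k) :
    μ (range (codingSum (fun _ => S) fun d => τ d p)) ≠ 0 := by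
  have := FiniteDimensional.proper_real E
  set N := (Fintype.card D : ℝ≥0∞)
  set s := ENNReal.ofReal |S.det|
  have hN0 : N ≠ 0 := left_ne_zero_of_mul (zero_lt_one.trans hdet).ne'
  have hs0 : s ≠ 0 := right_ne_zero_of_mul (zero_lt_one.trans hdet).ne'
  have : Nonempty D := Fintype.card_pos_iff.1 (Nat.pos_of_ne_zero (Nat.cast_ne_zero.1 hN0))
  intro hμ
  have hlim := ENNReal.Tendsto.const_mul (tendsto_measure_iUnion_levelImage μ hS τ p hμ) (.inr hc)
  rw [mul_zero] at hlim
  refine (measure_closedBall_pos μ (0 : E) one_pos).not_ge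
    (ge_of_tendsto_of_frequently hlim (hfreq.mono fun k hk => ?_))
  have hx0 : (N ^ 2 * s) ^ k ≠ 0 := pow_ne_zero k (mul_ne_zero (pow_ne_zero 2 hN0) hs0)
  have hxtop : (N ^ 2 * s) ^ k ≠ ∞ := ENNReal.pow_ne_top
    (ENNReal.mul_ne_top (ENNReal.pow_ne_top (ENNReal.natCast_ne_top _)) ENNReal.ofReal_ne_top)
  refine (ENNReal.mul_le_mul_iff_right hx0 hxtop).1 ?_
  calc (N ^ 2 * s) ^ k * μ (closedBall 0 1)
      ≤ μ (⋃ i : Fin k → D, levelImage S τ i p) * overlapCount S τ k p :=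
        pow_mul_measure_closedBall_le μ (by simpa [s] using hs0) τ k p
    _ ≤ μ (⋃ i : Fin k → D, levelImage S τ i p) * (c * (N ^ 2 * s) ^ k) := by gcongr
    _ = _ := by ring

variable [FiniteDimensional ℝ F] [MeasurableSpace F] [BorelSpace F] {S : E →L[ℝ] E}
  {τ : D → F →L[ℝ] E} (ν : Measure F) [ν.IsAddHaarMeasure]

theorem IsTransverse.exists_measure_overlapSet_cons_le (h : IsTransverse S τ) (R : ℝ) :
    ∃ C ≠ ∞, ∀ (k : ℕ) (d d' : D) (w w' : Fin k → D), d ≠ d' →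
      ν (closedBall 0 R ∩
        overlapSet S τ (Fin.cons d w : Fin (k + 1) → D) (Fin.cons d' w' : Fin (k + 1) → D)) ≤
        C * ENNReal.ofReal |S.det| ^ (k + 1) := by
  have := FiniteDimensional.proper_real E
  obtain ⟨K, hK⟩ := h
  obtain ⟨C, hC, hle⟩ := exists_measure_closedBall_inter_preimage_le (.addHaar : Measure E) ν R K
  refine ⟨C * Measure.addHaar (closedBall (0 : E) 2),
    ENNReal.mul_ne_top hC measure_closedBall_lt_top.ne, fun k d d' w w' hdd' => ?_⟩
  obtain ⟨J, hJ, hanti⟩ := hK d d' hdd' (List.ofFn w) (List.ofFn w')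
  simp only [overlapSet, levelTranslation, List.ofFn_cons]
  refine (hle _ J hJ hanti _ (isCompact_pow_image_closedBall S _ 2).measurableSet).trans_eq ?_
  rw [addHaar_image_pow, mul_right_comm, mul_assoc]

theorem IsTransverse.exists_lintegral_overlapCount_le [Fintype D] (h : IsTransverse S τ)
    (hdet : 1 < Fintype.card D * ENNReal.ofReal |S.det|) (R : ℝ) :
    ∃ M ≠ ∞, ∀ k, ∫⁻ p in closedBall 0 R, overlapCount S τ k p ∂ν ≤
      M * ((Fintype.card D : ℝ≥0∞) ^ 2 * ENNReal.ofReal |S.det|) ^ k := by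
  have := FiniteDimensional.proper_real F
  set N := (Fintype.card D : ℝ≥0∞)
  set s := ENNReal.ofReal |S.det| with hs
  have hN0 : N ≠ 0 := left_ne_zero_of_mul (zero_lt_one.trans hdet).ne'
  have hNtop : N ≠ ∞ := ENNReal.natCast_ne_top _
  have hS0 : S.det ≠ 0 := fun h0 => by simp [hs, h0] at hdet
  have hNx : N < N ^ 2 * s :=
    calc N = N * 1 := (mul_one N).symm
      _ < N * (N * s) := ENNReal.mul_lt_mul_right hN0 hNtop hdet
      _ = N ^ 2 * s := by ring
  obtain ⟨C, hC, hle⟩ := h.exists_measure_overlapSet_cons_le ν R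
  refine exists_le_mul_pow_of_succ_le hNx
    (ENNReal.mul_ne_top (ENNReal.pow_ne_top hNtop) ENNReal.ofReal_ne_top) hC ?_ fun k => ?_
  · rw [lintegral_overlapCount]
    exact ENNReal.sum_ne_top.2 fun i _ => ENNReal.sum_ne_top.2 fun j _ =>
      measure_ne_top_of_subset inter_subset_left measure_closedBall_lt_top.ne
  · refine (lintegral_overlapCount_succ_le (S.toContinuousLinearEquivOfDetNeZero hS0).injective τ ν
      R k (hle k)).trans_eq ?_
    ring

theorem IsTransverse.ae_measure_range_codingSum_ne_zero [Fintype D] (h : IsTransverse S τ)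
    (hS : ‖S‖ < 1) (hdet : 1 < Fintype.card D * ENNReal.ofReal |S.det|) :
    ∀ᵐ p ∂ν, μ (range (codingSum (fun _ => S) fun d => τ d p)) ≠ 0 := by
  set x := (Fintype.card D : ℝ≥0∞) ^ 2 * ENNReal.ofReal |S.det|
  have hN0 : (Fintype.card D : ℝ≥0∞) ≠ 0 := left_ne_zero_of_mul (zero_lt_one.trans hdet).ne'
  have hs0 : ENNReal.ofReal |S.det| ≠ 0 := right_ne_zero_of_mul (zero_lt_one.trans hdet).ne'
  have hx0 : x ≠ 0 := mul_ne_zero (pow_ne_zero 2 hN0) hs0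
  have hxtop : x ≠ ∞ :=
    ENNReal.mul_ne_top (ENNReal.pow_ne_top (ENNReal.natCast_ne_top _)) ENNReal.ofReal_ne_top
  rw [← Measure.restrict_univ (μ := ν), ← iUnion_closedBall_nat (0 : F), ae_restrict_iUnion_iff]
  intro R
  obtain ⟨M, hM, hle⟩ := h.exists_lintegral_overlapCount_le ν hdet R
  filter_upwards [ae_exists_frequently_le_mul (measurable_overlapCount S τ)
    (fun k => pow_ne_zero k hx0) (fun k => ENNReal.pow_ne_top hxtop) hM hle] with p ⟨c, hc, hfreq⟩
  exact measure_range_codingSum_ne_zero_of_frequently μ hS hdet hc hfreq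

end HomogeneousSystem

section Transversality

variable {ι E : Type*} [NormedAddCommGroup E] [NormedSpace ℝ E]

theorem exists_norm_apply_le_apply_eq_neg {s t : ι} (hst : s ≠ t) :
    ∃ J : E →L[ℝ] ι → E, (∀ v i, ‖J v i‖ ≤ ‖v‖) ∧ ∀ v, J v s = v ∧ J v t = -v := by
  classical
  refine ⟨.single ℝ (fun _ => E) s - .single ℝ (fun _ => E) t, fun v i => ?_, fun v => ?_⟩
  · obtain rfl | his := eq_or_ne i s
    · simp [hst]
    · obtain rfl | hit := eq_or_ne i t <;> simp [*]
  · simp [hst, hst.symm]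

theorem le_norm_add_sub_neg_add {A B : E →L[ℝ] E} {ρ : ℝ} (hA : ‖A‖ ≤ ρ) (hB : ‖B‖ ≤ ρ)
    {v x y : E} (hx : ‖x‖ ≤ 2 * ‖v‖) (hy : ‖y‖ ≤ 2 * ‖v‖) :
    (2 - 4 * ρ) * ‖v‖ ≤ ‖v + A x - (-v + B y)‖ := by
  have hAx := A.le_of_opNorm_le_of_le hA hx
  have hBy := B.le_of_opNorm_le_of_le hB hy
  calc (2 - 4 * ρ) * ‖v‖ ≤ ‖(2 : ℝ) • v‖ - ‖B y - A x‖ := by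
        rw [norm_smul, Real.norm_two]
        linarith [norm_sub_le (B y) (A x)]
    _ ≤ ‖(2 : ℝ) • v - (B y - A x)‖ := norm_sub_norm_le _ _
    _ = ‖v + A x - (-v + B y)‖ := by rw [two_smul]; abel_nf

variable {L : ι → E →L[ℝ] E}

theorem antilipschitzWith_linearPart_left (hcomm : ∀ i j, Commute (L i) (L j))
    (hL : ∀ i, ‖L i‖ ≤ 1) {K : ℝ≥0} {u w : List ι}
    (h : AntilipschitzWith K (linearPart L (u ++ w))) : AntilipschitzWith K (linearPart L u) := by
  refine AddMonoidHomClass.antilipschitz_of_bound _ fun x => ?_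
  have hw : ‖linearPart L w‖ ≤ 1 := by simpa using norm_linearPart_le (ρ := 1) hL w
  calc ‖x‖ ≤ K * ‖linearPart L (u ++ w) x‖ := h.le_mul_norm (map_zero _) x
    _ = K * ‖linearPart L w (linearPart L u x)‖ := by
      rw [linearPart_eq_of_perm hcomm List.perm_append_comm, linearPart_append]
      rfl
    _ ≤ K * ‖linearPart L u x‖ := by
      gcongr
      simpa using ContinuousLinearMap.le_of_opNorm_le _ hw (linearPart L u x)

section Blocks

variable {D F : Type*} [NormedAddCommGroup F] [NormedSpace ℝ F] {τ : ι → F →L[ℝ] E} {A : E →L[ℝ] E}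
  {word : D → List ι}

theorem translationPart_block_cons {d : D} (hA : linearPart L (word d) = A) {u r : List ι} {s : ι}
    (hd : word d = u ++ s :: r) (w : List D) (p : F) :
    translationPart (fun _ => A * A) (fun d => translationPart L τ (word d)) (d :: w) p =
      translationPart L τ u p + linearPart L u (τ s p + L s (translationPart L τ r p +
        linearPart L r (A (translationPart (fun _ => A * A)
          (fun d => translationPart L τ (word d)) w p)))) := by
  change translationPart L τ (word d) p + A (A _) = _
  nth_rw 1 [← hA]
  rw [hd, translationPart_append, linearPart_append]
  simp [translationPart, linearPart_cons, add_assoc]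

theorem translationPart_block_mem {p : F} {K : Set E} (h0 : 0 ∈ K)
    (hK : ∀ i, MapsTo (fun x => τ i p + L i x) K K) (hAK : MapsTo A K K)
    (hA : ∀ d, linearPart L (word d) = A) (w : List D) :
    translationPart (fun _ => A * A) (fun d => translationPart L τ (word d)) w p ∈ K := by
  have hblock (d : D) : MapsTo (fun x => translationPart L τ (word d) p + (A * A) x) K K :=
    fun x hx => by simpa [hA d] using translationPart_add_linearPart_mem hK (hAK hx) (word d)
  simpa using translationPart_add_linearPart_mem (L := fun _ => A * A) hblock h0 w

theorem norm_translationPart_add_linearPart_block_le {ρ : ℝ} (hρ : ρ ≤ 1 / 2) (hL : ∀ i, ‖L i‖ ≤ ρ)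
    (hA1 : ‖A‖ ≤ 1) (hA : ∀ d, linearPart L (word d) = A) {p : F} {R : ℝ} (hR : 0 ≤ R)
    (hp : ∀ i, ‖τ i p‖ ≤ R) (q : List ι) (w : List D) :
    ‖translationPart L τ q p + linearPart L q (A (translationPart (fun _ => A * A)
      (fun d => translationPart L τ (word d)) w p))‖ ≤ 2 * R := by
  have hball (i : ι) :
      MapsTo (fun x => τ i p + L i x) (closedBall 0 (2 * R)) (closedBall 0 (2 * R)) :=
    mapsTo_closedBall_zero (hL i) (hp i) (by nlinarith)
  have hAball : MapsTo A (closedBall 0 (2 * R)) (closedBall 0 (2 * R)) := by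
    simpa using mapsTo_closedBall_zero (r := 0) (R := 2 * R) hA1 norm_zero.le (by simp)
  have hblock := translationPart_block_mem (mem_closedBall_self (by positivity)) hball hAball hA w
  exact mem_closedBall_zero_iff.1 (translationPart_add_linearPart_mem hball (hAball hblock) q)

end Blocks

theorem isTransverse_translationPart [Fintype ι] (hcomm : ∀ i j, Commute (L i) (L j)) {ρ : ℝ≥0}
    (hρ : (ρ : ℝ) < 1 / 2) (hL : ∀ i, ‖L i‖ ≤ ρ) {D : Type*} {word : D → List ι}
    (hword : Function.Injective word) {w₀ : List ι} (hperm : ∀ d, (word d).Perm w₀) {K : ℝ≥0}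
    (hK : AntilipschitzWith K (linearPart L w₀)) :
    IsTransverse (linearPart L w₀ * linearPart L w₀)
      fun d => translationPart L ContinuousLinearMap.proj (word d) := by
  set A := linearPart L w₀
  have hA (d : D) : linearPart L (word d) = A := linearPart_eq_of_perm hcomm (hperm d)
  have hL1 (i : ι) : ‖L i‖ ≤ 1 := by linarith [hL i]
  have hA1 : ‖A‖ ≤ 1 := by simpa using norm_linearPart_le (ρ := 1) hL1 w₀
  have hδ : 0 < 2 - 4 * (ρ : ℝ) := by linarith
  refine ⟨(2 - 4 * (ρ : ℝ))⁻¹.toNNReal * K, fun d d' hdd' w w' => ?_⟩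
  obtain ⟨u, s, r, t, r', hst, hd, hd'⟩ := exists_eq_append_cons_of_ne
    ((hperm d).trans (hperm d').symm).length_eq (hword.ne hdd')
  obtain ⟨J, hJ, hJst⟩ := exists_norm_apply_le_apply_eq_neg (E := E) hst
  refine ⟨J, J.opNorm_le_bound zero_le_one fun v => ?_,
    AddMonoidHomClass.antilipschitz_of_bound _ fun v => ?_⟩
  · rw [one_mul]
    exact (pi_norm_le_iff_of_nonneg (norm_nonneg v)).2 (hJ v)
  have htail := norm_translationPart_add_linearPart_block_le (τ := ContinuousLinearMap.proj) hρ.le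
    hL hA1 hA (norm_nonneg v) (hJ v)
  have hsep := le_norm_add_sub_neg_add (hL s) (hL t) (htail r w) (htail r' w')
  have hprefix : AntilipschitzWith K (linearPart L u) := by
    refine antilipschitzWith_linearPart_left hcomm hL1 (w := s :: r) ?_
    rwa [← hd, hA]
  rw [ContinuousLinearMap.comp_apply, sub_apply, translationPart_block_cons (hA d) hd,
    translationPart_block_cons (hA d') hd', add_sub_add_left_eq_sub, ← map_sub,
    ContinuousLinearMap.proj_apply, ContinuousLinearMap.proj_apply, (hJst v).1, (hJst v).2,
    NNReal.coe_mul, Real.coe_toNNReal _ (inv_nonneg.2 hδ.le), mul_assoc,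
    ← div_eq_inv_mul, le_div_iff₀' hδ]
  exact hsep.trans (hprefix.le_mul_norm (map_zero _) _)

end Transversality

section NonemptyInterior

variable {ι E : Type*} [NormedAddCommGroup E] [NormedSpace ℝ E] [FiniteDimensional ℝ E]
  [MeasurableSpace E] [BorelSpace E]

theorem interior_nonempty_of_add_image_subset (μ : Measure E) [μ.IsAddHaarMeasure] {A : E →L[ℝ] E}
    (hA : A.det ≠ 0) {X K : Set E} (hX : IsCompact X) (hX0 : μ X ≠ 0) (hXK : X + A '' X ⊆ K) :
    (interior K).Nonempty := by
  have hAX0 : μ (A '' X) ≠ 0 := by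
    rw [Measure.addHaar_image_continuousLinearMap]
    exact mul_ne_zero (by simpa using hA) hX0
  exact (interior_add_nonempty_of_addHaar_ne_zero μ hX.measurableSet
    (hX.image A.continuous).measurableSet hX0 hAX0).mono (interior_mono hXK)

theorem typical_selfAffine_nonempty_interior_of_commute_general [Fintype ι] (L : ι → E →L[ℝ] E)
    (hnorm : ∀ i, ‖L i‖ < 1 / 2) (hcomm : ∀ i j, Commute (L i) (L j))
    (hsum : 1 < ∑ i, |(L i).det| ^ 2) (ν : Measure (ι → E)) [ν.IsAddHaarMeasure] :
    ∀ᵐ a ∂ν, (interior (range (codingSum L a))).Nonempty := by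
  obtain ⟨ρ, hρ, hL⟩ := exists_nnreal_lt_forall_norm_le one_half_pos hnorm
  have hL1 (i : ι) : ‖L i‖ < 1 := (hnorm i).trans one_half_lt_one
  obtain ⟨w, D, hw, hperm, hcard⟩ := exists_perm_one_lt_card_mul_prod _ hsum
  have : Nonempty ι := ⟨w.head hw⟩
  set A := linearPart L w
  have hDA (v : D) : linearPart L v = A := linearPart_eq_of_perm hcomm (hperm v v.2)
  have hA : ‖A‖ < 1 := (norm_linearPart_le hL w).trans_lt
    (pow_lt_one₀ ρ.2 (hρ.trans one_half_lt_one) (List.length_eq_zero_iff.not.2 hw))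
  have hdet : 1 < Fintype.card D * ENNReal.ofReal |(A * A).det| := by
    rwa [← abs_det_linearPart_mul_self, ← ENNReal.one_lt_ofReal,
      ENNReal.ofReal_mul (Nat.cast_nonneg _), ENNReal.ofReal_natCast, ← Fintype.card_coe D] at hcard
  have hA0 : A.det ≠ 0 := fun h0 => by simp [det_mul, h0] at hdet
  have htrans := isTransverse_translationPart hcomm hρ hL Subtype.val_injective
    (fun v : D => hperm v v.2) (A.toContinuousLinearEquivOfDetNeZero hA0).antilipschitz
  have hAA := norm_mul_self_lt_one hA
  filter_upwards [htrans.ae_measure_range_codingSum_ne_zero .addHaar ν hAA hdet] with a ha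
  refine interior_nonempty_of_add_image_subset .addHaar hA0
    (isCompact_range_codingSum (fun _ => hAA) _) ha ?_
  refine range_codingSum_add_image_subset hA (isCompact_range_codingSum hL1 a).isClosed
    (range_nonempty _) fun v x hx => ?_
  simpa only [hDA] using translationPart_add_linearPart_mem (τ := ContinuousLinearMap.proj)
    (mapsTo_range_codingSum hL1 a) hx v.1

end NonemptyInterior

theorem det_toEuclideanCLM {n : Type*} [Fintype n] [DecidableEq n] (A : Matrix n n ℝ) :
    (Matrix.toEuclideanCLM (𝕜 := ℝ) A).det = A.det := by
  rw [ContinuousLinearMap.det, Matrix.coe_toEuclideanCLM_eq_toEuclideanLin, LinearMap.det_toLpLin]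

theorem attractor_eq_range_codingSum (T : Fin m → Matrix (Fin d) (Fin d) ℝ)
    (a : Fin m → EuclideanSpace ℝ (Fin d)) :
    attractor T a = range (codingSum (fun i => Matrix.toEuclideanCLM (𝕜 := ℝ) (T i)) a) := by
  have hcoding : codingMap T a = codingSum (fun i => Matrix.toEuclideanCLM (𝕜 := ℝ) (T i)) a := by
    funext x
    simp only [codingMap, codingSum, wordProd, linearPart, map_list_prod, List.map_ofFn]
    rfl
  rw [attractor, hcoding]

/-- **Theorem 1.3.** If `‖T_i‖ < 1/2` for all `i`, the matrices `T_i` pairwise commute,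
and `∑_i |det T_i|² > 1`, then for Lebesgue-a.e. `a ∈ ℝ^{md}` the self-affine set `K^a`
has non-empty interior. -/
theorem typical_selfAffine_nonempty_interior_of_commute
    (T : Fin m → Matrix (Fin d) (Fin d) ℝ)
    (hinv : ∀ i, IsUnit (T i).det)
    (hnorm : ∀ i, opNorm (T i) < 1 / 2)
    (hcomm : ∀ i j, T i * T j = T j * T i)
    (hsum : 1 < ∑ i : Fin m, |(T i).det| ^ 2) :
    ∀ᵐ a ∂(volume : Measure (Fin m → EuclideanSpace ℝ (Fin d))),
      (interior (attractor T a)).Nonempty := by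
  simp_rw [attractor_eq_range_codingSum]
  exact typical_selfAffine_nonempty_interior_of_commute_general _ hnorm
    (fun i j => Commute.map (hcomm i j) _)
    (by simpa only [det_toEuclideanCLM] using hsum) volume

end SelfAffine
end
end

section
/- Assume δ := max_{1≤i≤m} ‖T_i‖ < 1/2. Then for all a ∈ ℝ^{md}, all x = (x_k), y = (y_k) ∈ Σ with x_1 ≠ y_1, and all unit vectors v ∈ ℝ^d, the gradient with respect to a of the function a ↦ ⟨v, π^a(x) − π^a(y)⟩ (a linear function of a ∈ ℝ^{md}) has Euclidean norm at least (1 − 2δ)/(1 − δ). -/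
/-!
The map `a ↦ π^a(x)` is linear, and `π^a(x) = a_{x_1} + T_{x_1} π^a(σx)` with `σ` the shift, so the
first letter dominates: `π^a(x)` is within `δ / (1 - δ) * max_i ‖a_i‖` of `a_{x_1}`. Test the
gradient on the vector `b` of norm `√2` whose `x_1`-block is the unit vector `v`, whose `y_1`-block
is `-v`, and whose other blocks vanish: `π^b(x) - π^b(y)` is within `2δ / (1 - δ)` of `2v`, so
`⟨v, π^b(x) - π^b(y)⟩ ≥ 2(1 - 2δ) / (1 - δ)`, and dividing by `‖b‖ = √2` even improves the bound by
a factor `√2`.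
-/

open MeasureTheory

noncomputable section

namespace SelfAffine

variable {d m : ℕ}

section Gradient

variable {𝕜 F : Type*} [RCLike 𝕜] [NormedAddCommGroup F] [InnerProductSpace 𝕜 F] [CompleteSpace F]

lemma norm_apply_le_norm_gradient_mul {g : F → 𝕜} (hg : IsBoundedLinearMap 𝕜 g) (a b : F) :
    ‖g b‖ ≤ ‖gradient g a‖ * ‖b‖ := by
  have hgrad : ‖gradient g a‖ = ‖hg.toContinuousLinearMap‖ := by
    rw [gradient, LinearIsometryEquiv.norm_map, hg.fderiv]
  rw [hgrad]
  exact hg.toContinuousLinearMap.le_opNorm b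

end Gradient

section DifferenceOfSingles

variable {ι : Type*} [DecidableEq ι] {E : Type*} [SeminormedAddCommGroup E]

lemma norm_single_sub_single_of_ne [Fintype ι] {i j : ι} (hij : i ≠ j) (v : E) :
    ‖(PiLp.single 2 i v - PiLp.single 2 j v : PiLp 2 fun _ : ι => E)‖ = √2 * ‖v‖ := by
  have hsq : ‖(PiLp.single 2 i v - PiLp.single 2 j v : PiLp 2 fun _ : ι => E)‖ ^ 2
      = 2 * ‖v‖ ^ 2 := by
    rw [PiLp.norm_sq_eq_of_L2, Fintype.sum_eq_add i j hij fun k hk => by simp [hk.1, hk.2]]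
    simp [hij, hij.symm, two_mul]
  rw [← Real.sqrt_sq (norm_nonneg _), hsq, Real.sqrt_mul zero_le_two,
    Real.sqrt_sq (norm_nonneg v)]

lemma norm_single_sub_single_apply_le {i j : ι} (hij : i ≠ j) (v : E) (k : ι) :
    ‖(PiLp.single 2 i v - PiLp.single 2 j v : PiLp 2 fun _ : ι => E) k‖ ≤ ‖v‖ := by
  obtain rfl | hki := eq_or_ne k i
  · simp [hij]
  · obtain rfl | hkj := eq_or_ne k j
    · simp [hki]
    · simp [hki, hkj]

end DifferenceOfSingles

section PrefixProd

variable {ι M : Type*} [Monoid M]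

/-- The product `T_{x|n} = T_{x_1} ⋯ T_{x_n}` along the first `n` letters of an infinite word, in
any monoid. Letters are indexed from `0`, so `x 0` is the first one. -/
def prefixProd (T : ι → M) (x : ℕ → ι) (n : ℕ) : M :=
  (List.ofFn fun k : Fin n => T (x k)).prod

@[simp]
lemma prefixProd_zero (T : ι → M) (x : ℕ → ι) : prefixProd T x 0 = 1 := by
  simp [prefixProd]

lemma prefixProd_succ (T : ι → M) (x : ℕ → ι) (n : ℕ) :
    prefixProd T x (n + 1) = T (x 0) * prefixProd T (fun k => x (k + 1)) n := by
  simp [prefixProd, List.ofFn_succ]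

end PrefixProd

section Banach

variable {ι 𝕜 E : Type*} [NontriviallyNormedField 𝕜] [NormedAddCommGroup E] [NormedSpace 𝕜 E]
  {T : ι → E →L[𝕜] E} {δ : ℝ}

/-- The coding map of the affine maps `w ↦ T i w + a i` of a normed space, for an arbitrary
alphabet `ι`. As in `codingMap`, the limit of the compositions is written as a series, which is
meaningful when the `‖T i‖` are bounded by some `δ < 1` and the `‖a i‖` are bounded. -/
def operatorCodingMap (T : ι → E →L[𝕜] E) (a : ι → E) (x : ℕ → ι) : E :=
  ∑' n, prefixProd T x n (a (x n))

lemma norm_prefixProd_apply_le (hT : ∀ i, ‖T i‖ ≤ δ) (x : ℕ → ι) (n : ℕ) (w : E) :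
    ‖prefixProd T x n w‖ ≤ δ ^ n * ‖w‖ := by
  induction n generalizing x with
  | zero => simp
  | succ n ih =>
    rw [prefixProd_succ, mul_apply_eq_comp, pow_succ', mul_assoc]
    exact (T (x 0)).le_of_opNorm_le_of_le (hT _) (ih _)

variable {a : ι → E} {C : ℝ}

lemma norm_prefixProd_apply_le_of_bounded (hT : ∀ i, ‖T i‖ ≤ δ) (ha : ∀ i, ‖a i‖ ≤ C)
    (x : ℕ → ι) (n : ℕ) : ‖prefixProd T x n (a (x n))‖ ≤ δ ^ n * C := by
  have hδ₀ : 0 ≤ δ := (norm_nonneg _).trans (hT (x 0))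
  exact (norm_prefixProd_apply_le hT x n _).trans
    (mul_le_mul_of_nonneg_left (ha _) (pow_nonneg hδ₀ n))

lemma norm_operatorCodingMap_le (hT : ∀ i, ‖T i‖ ≤ δ) (hδ : δ < 1) (ha : ∀ i, ‖a i‖ ≤ C)
    (x : ℕ → ι) : ‖operatorCodingMap T a x‖ ≤ (1 - δ)⁻¹ * C := by
  have hδ₀ : 0 ≤ δ := (norm_nonneg _).trans (hT (x 0))
  exact tsum_of_norm_bounded ((hasSum_geometric_of_lt_one hδ₀ hδ).mul_right C)
    (norm_prefixProd_apply_le_of_bounded hT ha x)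

variable [CompleteSpace E]

lemma summable_prefixProd_apply (hT : ∀ i, ‖T i‖ ≤ δ) (hδ : δ < 1) (ha : ∀ i, ‖a i‖ ≤ C)
    (x : ℕ → ι) : Summable fun n => prefixProd T x n (a (x n)) := by
  have hδ₀ : 0 ≤ δ := (norm_nonneg _).trans (hT (x 0))
  exact .of_norm_bounded ((summable_geometric_of_lt_one hδ₀ hδ).mul_right C)
    (norm_prefixProd_apply_le_of_bounded hT ha x)

lemma operatorCodingMap_eq_add (hT : ∀ i, ‖T i‖ ≤ δ) (hδ : δ < 1) (ha : ∀ i, ‖a i‖ ≤ C)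
    (x : ℕ → ι) :
    operatorCodingMap T a x = a (x 0) + T (x 0) (operatorCodingMap T a fun k => x (k + 1)) := by
  rw [operatorCodingMap, (summable_prefixProd_apply hT hδ ha x).tsum_eq_zero_add,
    operatorCodingMap, (T (x 0)).map_tsum (summable_prefixProd_apply hT hδ ha _)]
  simp [prefixProd_succ]

lemma norm_operatorCodingMap_sub_le (hT : ∀ i, ‖T i‖ ≤ δ) (hδ : δ < 1) (ha : ∀ i, ‖a i‖ ≤ C)
    (x : ℕ → ι) : ‖operatorCodingMap T a x - a (x 0)‖ ≤ δ / (1 - δ) * C := by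
  rw [operatorCodingMap_eq_add hT hδ ha x, add_sub_cancel_left, div_eq_mul_inv, mul_assoc]
  exact (T (x 0)).le_of_opNorm_le_of_le (hT _) (norm_operatorCodingMap_le hT hδ ha _)

lemma isBoundedLinearMap_operatorCodingMap [Fintype ι] (p : ENNReal) [Fact (1 ≤ p)]
    (hT : ∀ i, ‖T i‖ ≤ δ) (hδ : δ < 1) (x : ℕ → ι) :
    IsBoundedLinearMap 𝕜 fun b : PiLp p fun _ : ι => E => operatorCodingMap T b x := by
  have hsum (b : PiLp p fun _ : ι => E) : Summable fun n => prefixProd T x n (b (x n)) :=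
    summable_prefixProd_apply hT hδ (PiLp.norm_apply_le b) x
  refine IsLinearMap.with_bound ⟨fun b c => ?_, fun r b => ?_⟩ (1 - δ)⁻¹ fun b =>
    norm_operatorCodingMap_le hT hδ (PiLp.norm_apply_le b) x
  · simp only [operatorCodingMap, PiLp.add_apply, map_add, (hsum b).tsum_add (hsum c)]
  · simp only [operatorCodingMap, PiLp.smul_apply, map_smul, (hsum b).tsum_const_smul]

end Banach

section Hilbert

variable {ι 𝕜 E : Type*} [RCLike 𝕜] [NormedAddCommGroup E] [InnerProductSpace 𝕜 E]
  [CompleteSpace E] {T : ι → E →L[𝕜] E} {δ : ℝ}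

lemma le_norm_inner_operatorCodingMap_sub (hT : ∀ i, ‖T i‖ ≤ δ) (hδ : δ < 1) {b : ι → E}
    {x y : ℕ → ι} {v : E} (hbx : b (x 0) = v) (hby : b (y 0) = -v) (hb : ∀ i, ‖b i‖ ≤ ‖v‖) :
    2 * ((1 - 2 * δ) / (1 - δ)) * ‖v‖ ^ 2 ≤
      ‖inner 𝕜 v (operatorCodingMap T b x - operatorCodingMap T b y)‖ := by
  set w := operatorCodingMap T b x - operatorCodingMap T b y
  have hdist : ‖(2 : 𝕜) • v - w‖ ≤ 2 * (δ / (1 - δ) * ‖v‖) := by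
    have hx := norm_operatorCodingMap_sub_le hT hδ hb x
    have hy := norm_operatorCodingMap_sub_le hT hδ hb y
    rw [hbx, norm_sub_rev] at hx
    rw [hby] at hy
    calc ‖(2 : 𝕜) • v - w‖
        = ‖(v - operatorCodingMap T b x) + (operatorCodingMap T b y - -v)‖ := by
          simp only [two_smul, w]
          congr 1
          abel
      _ ≤ 2 * (δ / (1 - δ) * ‖v‖) := by linarith [norm_add_le_of_le hx hy]
  have hmain : ‖inner 𝕜 v ((2 : 𝕜) • v)‖ = 2 * ‖v‖ ^ 2 := by
    simp [inner_smul_right, inner_self_eq_norm_sq_to_K]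
  have herror : ‖inner 𝕜 v ((2 : 𝕜) • v - w)‖ ≤ ‖v‖ * (2 * (δ / (1 - δ) * ‖v‖)) :=
    (norm_inner_le_norm _ _).trans (mul_le_mul_of_nonneg_left hdist (norm_nonneg v))
  have hδ' : 1 - δ ≠ 0 := by linarith
  calc 2 * ((1 - 2 * δ) / (1 - δ)) * ‖v‖ ^ 2
      = 2 * ‖v‖ ^ 2 - ‖v‖ * (2 * (δ / (1 - δ) * ‖v‖)) := by
        field_simp
        ring
    _ ≤ ‖inner 𝕜 v ((2 : 𝕜) • v)‖ - ‖inner 𝕜 v ((2 : 𝕜) • v - w)‖ := by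
      rw [hmain]
      linarith
    _ ≤ ‖inner 𝕜 v w‖ := by
      rw [inner_sub_right, sub_le_comm]
      exact norm_sub_norm_le _ _

theorem gradient_inner_codingMap_sub_ge_general [Fintype ι] (hT : ∀ i, ‖T i‖ ≤ δ) (hδ : δ < 1)
    (a : PiLp 2 fun _ : ι => E) {x y : ℕ → ι} (hxy : x 0 ≠ y 0) (v : E) :
    √2 * ((1 - 2 * δ) / (1 - δ)) * ‖v‖ ≤
      ‖gradient (fun b : PiLp 2 fun _ : ι => E =>
          inner 𝕜 v (operatorCodingMap T b x - operatorCodingMap T b y)) a‖ := by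
  classical
  obtain rfl | hv := eq_or_ne v 0
  · simp
  set g : (PiLp 2 fun _ : ι => E) → 𝕜 := fun b =>
    inner 𝕜 v (operatorCodingMap T b x - operatorCodingMap T b y)
  have hg : IsBoundedLinearMap 𝕜 g :=
    (innerSL 𝕜 v).isBoundedLinearMap.comp <|
      (isBoundedLinearMap_operatorCodingMap 2 hT hδ x).sub
        (isBoundedLinearMap_operatorCodingMap 2 hT hδ y)
  set b : PiLp 2 fun _ : ι => E := PiLp.single 2 (x 0) v - PiLp.single 2 (y 0) v
  have hgb : 2 * ((1 - 2 * δ) / (1 - δ)) * ‖v‖ ^ 2 ≤ ‖g b‖ :=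
    le_norm_inner_operatorCodingMap_sub hT hδ (by simp [b, hxy]) (by simp [b, hxy.symm])
      (norm_single_sub_single_apply_le hxy v)
  have hb : ‖b‖ = √2 * ‖v‖ := norm_single_sub_single_of_ne hxy v
  refine le_of_mul_le_mul_right ?_ (show 0 < √2 * ‖v‖ by positivity)
  calc √2 * ((1 - 2 * δ) / (1 - δ)) * ‖v‖ * (√2 * ‖v‖)
      = √2 ^ 2 * ((1 - 2 * δ) / (1 - δ)) * ‖v‖ ^ 2 := by ring
    _ ≤ ‖g b‖ := by rwa [Real.sq_sqrt zero_le_two]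
    _ ≤ ‖gradient g a‖ * (√2 * ‖v‖) := hb ▸ norm_apply_le_norm_gradient_mul hg a b

end Hilbert

lemma codingMap_eq_operatorCodingMap (T : Fin m → Matrix (Fin d) (Fin d) ℝ)
    (a : Fin m → EuclideanSpace ℝ (Fin d)) (x : ℕ → Fin m) :
    codingMap T a x =
      operatorCodingMap (fun i => Matrix.toEuclideanCLM (𝕜 := ℝ) (T i)) a x := by
  simp only [codingMap, wordProd, operatorCodingMap, prefixProd, map_list_prod, List.map_ofFn,
    Function.comp_def]

open RealInnerProductSpace in
/-- **Lemma 3.2.** If `δ := max_i ‖T_i‖ < 1/2`, then for every `a ∈ ℝ^{md}`, every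
`x, y ∈ Σ` with `x_1 ≠ y_1` and every unit vector `v ∈ ℝ^d`, the gradient (in `a`) of
the linear function `a ↦ ⟨v, π^a(x) − π^a(y)⟩` has norm at least `(1 − 2δ)/(1 − δ)`.
Here `ℝ^{md}` carries its Euclidean (inner product) structure, as
`PiLp 2 (fun _ : Fin m => EuclideanSpace ℝ (Fin d))`. -/
theorem gradient_inner_codingMap_sub_ge
    (T : Fin m → Matrix (Fin d) (Fin d) ℝ)
    (hinv : ∀ i, IsUnit (T i).det)
    (δ : ℝ) (hδ : ∀ i, opNorm (T i) ≤ δ) (hδ' : δ < 1 / 2)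
    (a : PiLp 2 fun _ : Fin m => EuclideanSpace ℝ (Fin d))
    (x y : ℕ → Fin m) (hxy : x 0 ≠ y 0)
    (v : EuclideanSpace ℝ (Fin d)) (hv : ‖v‖ = 1) :
    (1 - 2 * δ) / (1 - δ) ≤
      ‖gradient (fun b : PiLp 2 fun _ : Fin m => EuclideanSpace ℝ (Fin d) =>
          ⟪v, codingMap T b x - codingMap T b y⟫) a‖ := by
  have hbound : 0 ≤ (1 - 2 * δ) / (1 - δ) := div_nonneg (by linarith) (by linarith)
  have hsqrt : (1 - 2 * δ) / (1 - δ) ≤ √2 * ((1 - 2 * δ) / (1 - δ)) * ‖v‖ := by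
    rw [hv, mul_one]
    exact le_mul_of_one_le_left hbound (Real.one_le_sqrt.2 one_le_two)
  simp only [codingMap_eq_operatorCodingMap]
  exact hsqrt.trans (gradient_inner_codingMap_sub_ge_general hδ (by linarith) a hxy v)

end SelfAffine
end
end

section
/- Let d ∈ ℕ and s > 1. Then there exist constants c, C > 0 depending only on d and s such that for every (x_1,…,x_d) ∈ ℝ^d \ {0}: c / (Σ_{i=1}^d |x_i|^{s−1}) ≤ ∫_ℝ dy / ((Σ_{i=1}^d |x_i|^s) + |y|^s) ≤ C / (Σ_{i=1}^d |x_i|^{s−1}). -/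
open MeasureTheory

noncomputable section

/-!
Write `A = ∑ |x_i| ^ s`. The substitution `y = A ^ (1 / s) z` shows that the integral is a
constant depending only on `s` times `A ^ (-θ)`, where `θ = 1 - 1 / s ∈ (0, 1)`. Since
`|x_i| ^ (s - 1) = (|x_i| ^ s) ^ θ`, it remains to compare `A ^ θ` with `∑ (|x_i| ^ s) ^ θ`: the
former is at most the latter because `t ↦ t ^ θ` is subadditive, and it is at least each summand of
the latter. On a space of dimension `n` the same argument works with `θ = 1 - n / s`.
-/

section PowerSums

variable {ι : Type*} {t : Finset ι} {b : ι → ℝ} {p : ℝ}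

lemma add_rpow_le_two_rpow_mul_add_rpow {a b : ℝ} (ha : 0 ≤ a) (hb : 0 ≤ b) (hp : 0 ≤ p) :
    (a + b) ^ p ≤ 2 ^ p * (a ^ p + b ^ p) := by
  wlog hab : a ≤ b generalizing a b
  · simpa only [add_comm] using this hb ha (le_of_not_ge hab)
  calc (a + b) ^ p ≤ (2 * b) ^ p := by gcongr; linarith
    _ = 2 ^ p * b ^ p := Real.mul_rpow zero_le_two hb
    _ ≤ 2 ^ p * (a ^ p + b ^ p) := by gcongr; exact le_add_of_nonneg_left (by positivity)

lemma rpow_sum_le_sum_rpow (hb : ∀ i ∈ t, 0 ≤ b i) (hp : 0 < p) (hp' : p ≤ 1) :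
    (∑ i ∈ t, b i) ^ p ≤ ∑ i ∈ t, b i ^ p :=
  Finset.le_sum_of_subadditive_on_pred (· ^ p) (0 ≤ ·) (Real.zero_rpow hp.ne').le
    (fun _ _ hx hy ↦ Real.rpow_add_le_add_rpow hx hy hp.le hp') (fun _ _ ↦ add_nonneg) b hb

lemma sum_rpow_le_card_mul_rpow_sum (hb : ∀ i ∈ t, 0 ≤ b i) (hp : 0 ≤ p) :
    ∑ i ∈ t, b i ^ p ≤ t.card * (∑ i ∈ t, b i) ^ p := by
  rw [← nsmul_eq_mul]
  exact Finset.sum_le_card_nsmul _ _ _ fun i hi ↦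
    Real.rpow_le_rpow (hb i hi) (Finset.single_le_sum hb hi) hp

end PowerSums

section Integral

variable {E : Type*} [NormedAddCommGroup E] [NormedSpace ℝ E] [FiniteDimensional ℝ E]
  [MeasurableSpace E] [BorelSpace E] (μ : Measure E) [μ.IsAddHaarMeasure] {s : ℝ}

lemma integrable_inv_one_add_norm_rpow (hs : (Module.finrank ℝ E : ℝ) < s) :
    Integrable (fun y : E ↦ (1 + ‖y‖ ^ s)⁻¹) μ := by
  have hs₀ : 0 < s := (Nat.cast_nonneg _).trans_lt hs
  refine ((integrable_one_add_norm hs).const_mul (2 ^ s)).mono'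
    (Measurable.aestronglyMeasurable (by fun_prop)) (.of_forall fun y ↦ ?_)
  have hbound : (1 + ‖y‖) ^ s ≤ 2 ^ s * (1 + ‖y‖ ^ s) := by
    simpa only [Real.one_rpow] using
      add_rpow_le_two_rpow_mul_add_rpow zero_le_one (norm_nonneg y) hs₀.le
  rw [Real.norm_of_nonneg (by positivity), Real.rpow_neg (by positivity), ← div_eq_mul_inv,
    inv_eq_one_div, div_le_div_iff₀ (by positivity) (by positivity), one_mul]
  exact hbound

lemma integral_inv_one_add_norm_rpow_pos (hs : (Module.finrank ℝ E : ℝ) < s) :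
    0 < ∫ y : E, (1 + ‖y‖ ^ s)⁻¹ ∂μ := by
  have hs₀ : 0 ≤ s := (Nat.cast_nonneg _).trans hs.le
  have hcont : Continuous fun y : E ↦ (1 + ‖y‖ ^ s)⁻¹ :=
    (continuous_const.add (continuous_norm.rpow_const fun _ ↦ .inr hs₀)).inv₀
      fun y ↦ (by positivity : 0 < 1 + ‖y‖ ^ s).ne'
  exact integral_pos_of_integrable_nonneg_nonzero (x := 0) hcont
    (integrable_inv_one_add_norm_rpow μ hs) (fun y ↦ by positivity) (by positivity)

lemma integral_inv_add_norm_rpow {A : ℝ} (hA : 0 < A) (hs : s ≠ 0) :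
    ∫ y : E, (A + ‖y‖ ^ s)⁻¹ ∂μ =
      (∫ y : E, (1 + ‖y‖ ^ s)⁻¹ ∂μ) / A ^ (1 - Module.finrank ℝ E / s) := by
  set R : ℝ := A ^ s⁻¹
  have hR : 0 < R := by positivity
  have hRs : R ^ s = A := Real.rpow_inv_rpow hA.le hs
  have hRn : R ^ Module.finrank ℝ E = A ^ (Module.finrank ℝ E / s) := by
    rw [← Real.rpow_mul_natCast hA.le, inv_mul_eq_div]
  have hscale (y : E) : (A + ‖y‖ ^ s)⁻¹ = A⁻¹ * (1 + ‖R⁻¹ • y‖ ^ s)⁻¹ := by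
    rw [norm_smul, norm_inv, Real.norm_of_nonneg hR.le,
      Real.mul_rpow (by positivity) (norm_nonneg y), Real.inv_rpow hR.le, hRs, ← mul_inv, mul_add,
      mul_one, mul_inv_cancel_left₀ hA.ne']
  calc ∫ y : E, (A + ‖y‖ ^ s)⁻¹ ∂μ
      = A⁻¹ * ∫ y : E, (1 + ‖R⁻¹ • y‖ ^ s)⁻¹ ∂μ := by
        simp only [hscale, integral_const_mul]
    _ = A⁻¹ * (A ^ (Module.finrank ℝ E / s) * ∫ y : E, (1 + ‖y‖ ^ s)⁻¹ ∂μ) := by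
        rw [Measure.integral_comp_inv_smul_of_nonneg μ (fun y : E ↦ (1 + ‖y‖ ^ s)⁻¹) hR.le, hRn,
          smul_eq_mul]
    _ = (∫ y : E, (1 + ‖y‖ ^ s)⁻¹ ∂μ) / A ^ (1 - Module.finrank ℝ E / s) := by
        rw [Real.rpow_sub hA, Real.rpow_one]
        field_simp

theorem integral_inv_sum_abs_rpow_add_abs_rpow_comparison_general
    (ι F : Type*) [Fintype ι] [NormedAddCommGroup F] (hs : (Module.finrank ℝ E : ℝ) < s) :
    ∃ c C : ℝ, 0 < c ∧ 0 < C ∧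
      ∀ x : ι → F, x ≠ 0 →
        c / (∑ i, ‖x i‖ ^ (s - Module.finrank ℝ E)) ≤
            (∫ y : E, ((∑ i, ‖x i‖ ^ s) + ‖y‖ ^ s)⁻¹ ∂μ) ∧
          (∫ y : E, ((∑ i, ‖x i‖ ^ s) + ‖y‖ ^ s)⁻¹ ∂μ) ≤
            C / (∑ i, ‖x i‖ ^ (s - Module.finrank ℝ E)) := by
  have hs₀ : 0 < s := (Nat.cast_nonneg _).trans_lt hs
  have hI := integral_inv_one_add_norm_rpow_pos μ hs
  set I := ∫ y : E, (1 + ‖y‖ ^ s)⁻¹ ∂μ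
  set θ : ℝ := 1 - Module.finrank ℝ E / s with hθ
  have hθ_pos : 0 < θ := sub_pos.mpr ((div_lt_one hs₀).mpr hs)
  have hθ_le : θ ≤ 1 := sub_le_self _ (by positivity)
  -- The summand `1` keeps the constant positive when `ι` is empty.
  refine ⟨I, (Fintype.card ι + 1) * I, hI, by positivity, fun x hx ↦ ?_⟩
  obtain ⟨j, hj⟩ := Function.ne_iff.mp hx
  have hpow (i : ι) : ‖x i‖ ^ (s - Module.finrank ℝ E) = (‖x i‖ ^ s) ^ θ := by
    rw [← Real.rpow_mul (norm_nonneg _), hθ, mul_sub, mul_one, mul_div_cancel₀ _ hs₀.ne']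
  have hA : 0 < ∑ i, ‖x i‖ ^ s := Finset.sum_pos' (fun i _ ↦ by positivity)
    ⟨j, Finset.mem_univ j, Real.rpow_pos_of_pos (norm_pos_iff.mpr hj) s⟩
  have hlower : (∑ i, ‖x i‖ ^ s) ^ θ ≤ ∑ i, (‖x i‖ ^ s) ^ θ :=
    rpow_sum_le_sum_rpow (fun i _ ↦ by positivity) hθ_pos hθ_le
  have hupper : ∑ i, (‖x i‖ ^ s) ^ θ ≤ Fintype.card ι * (∑ i, ‖x i‖ ^ s) ^ θ :=
    sum_rpow_le_card_mul_rpow_sum (fun i _ ↦ by positivity) hθ_pos.le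
  have hAθ : 0 < (∑ i, ‖x i‖ ^ s) ^ θ := Real.rpow_pos_of_pos hA θ
  simp only [hpow, integral_inv_add_norm_rpow μ hA hs₀.ne']
  refine ⟨div_le_div_of_nonneg_left hI.le hAθ hlower, ?_⟩
  rw [div_le_div_iff₀ hAθ (hAθ.trans_le hlower)]
  calc I * ∑ i, (‖x i‖ ^ s) ^ θ
      ≤ I * (Fintype.card ι * (∑ i, ‖x i‖ ^ s) ^ θ) := by gcongr
    _ ≤ (Fintype.card ι + 1) * I * (∑ i, ‖x i‖ ^ s) ^ θ := by
        linarith [mul_pos hI hAθ]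

end Integral

/-- **Lemma 3.7.** Let `d ∈ ℕ` and `s > 1`. Then, with constants depending only on
`d` and `s`, for every `(x_1, …, x_d) ∈ ℝ^d \ {0}`,
`∫_ℝ dy / ((∑_i |x_i|^s) + |y|^s) ≈ (∑_i |x_i|^{s−1})⁻¹`. -/
theorem integral_inv_sum_abs_rpow_add_abs_rpow_comparison (d : ℕ) (s : ℝ) (hs : 1 < s) :
    ∃ c C : ℝ, 0 < c ∧ 0 < C ∧
      ∀ x : Fin d → ℝ, x ≠ 0 →
        c / (∑ i : Fin d, |x i| ^ (s - 1)) ≤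
            (∫ y : ℝ, ((∑ i : Fin d, |x i| ^ s) + |y| ^ s)⁻¹) ∧
          (∫ y : ℝ, ((∑ i : Fin d, |x i| ^ s) + |y| ^ s)⁻¹) ≤
            C / (∑ i : Fin d, |x i| ^ (s - 1)) := by
  simpa only [Module.finrank_self, Nat.cast_one, Real.norm_eq_abs] using
    integral_inv_sum_abs_rpow_add_abs_rpow_comparison_general (volume : Measure ℝ) (Fin d) ℝ
      (by simpa only [Module.finrank_self, Nat.cast_one] using hs)
end
end

section
/- Let T_1,…,T_m be invertible d×d real matrices with t(T_1,…,T_m) > d. Then for every t with d < t < t(T_1,…,T_m), there exist a Borel probability measure μ on Σ = {1,…,m}^ℕ, a number r ∈ (0,1) and a constant C > 0 such that μ([I]) ≤ C g_t(I) r^{|I|} for every finite word I, where [I] denotes the cylinder set of sequences beginning with I and |I| is the length of I. -/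
/-!
For `0 ≤ t` the weight `g_t` is supermultiplicative, and since `t < t(T_1,…,T_m)` its sum `S` over
the words of some length `n` exceeds `1`. Draw blocks of length `n` independently with probability
proportional to `g_t` and let `μ` be the law of their concatenation. A word consisting of `q` whole
blocks then has measure at most `S⁻¹ ^ q` times its weight, so `r = S ^ (-1 / n)` works; an
incomplete last block costs only a constant, because there are finitely many of them and those of
weight zero have measure zero.
-/

open MeasureTheory Filter

noncomputable section

namespace SelfAffine

variable {d m : ℕ}

/-- `g_t(I) = α_d(T_I)^t |det T_I|`. -/
def gWord (T : Fin m → Matrix (Fin d) (Fin d) ℝ) (t : ℝ) {n : ℕ} (I : Fin n → Fin m) : ℝ :=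
  alphaMin (wordProd T I) ^ t * |(wordProd T I).det|

/-- the quantity `t(T_1, …, T_m)`. -/
def tParam (T : Fin m → Matrix (Fin d) (Fin d) ℝ) : ℝ :=
  sInf { t : ℝ | 0 ≤ t ∧ ∀ n : ℕ, 0 < n →
    ∑ I : Fin n → Fin m, alphaMin (wordProd T I) ^ t * |(wordProd T I).det| ≤ 1 }

/-- the cylinder set `[I] = {x ∈ Σ : x_1 … x_n = I}` of a finite word `I ∈ Σ_n`. -/
def cylinder {m n : ℕ} (I : Fin n → Fin m) : Set (ℕ → Fin m) :=
  { x | ∀ k : Fin n, x (k : ℕ) = I k }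

section Weights

open scoped NNReal

/-- A weight on the finite words over `α` that is supermultiplicative under concatenation and
vanishes on every extension of a word on which it vanishes. It is the abstract form of `g_t`. -/
structure IsSupermultiplicativeWeight {α : Type*} (g : List α → ℝ≥0) : Prop where
  mul_le_append : ∀ u v, g u * g v ≤ g (u ++ v)
  append_eq_zero : ∀ u v, g u = 0 → g (u ++ v) = 0

/-- The factor `x_a x_{a+1} ⋯ x_{a+ℓ-1}` of the infinite word `x` (letters numbered from `0`). -/
def segment {α : Type*} (x : ℕ → α) (a ℓ : ℕ) : List α :=
  (List.range' a ℓ).map x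

/-- The `j`-th block of length `n` of the infinite word `x`, as an element of the alphabet
`Fin n → α` of blocks. -/
def block {α : Type*} (n : ℕ) (x : ℕ → α) (j : ℕ) : Fin n → α :=
  fun k => x (j * n + k)

variable {α : Type*} {g : List α → ℝ≥0}

theorem segment_append_segment (x : ℕ → α) (a k ℓ : ℕ) :
    segment x a k ++ segment x (a + k) ℓ = segment x a (k + ℓ) := by
  rw [segment, segment, ← List.map_append, List.range'_append_1, segment]

theorem ofFn_eq_segment (x : ℕ → α) (a ℓ : ℕ) :
    List.ofFn (fun k : Fin ℓ => x (a + k)) = segment x a ℓ :=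
  List.ext_getElem (by simp [segment]) (by simp [segment])

theorem ofFn_block (n : ℕ) (x : ℕ → α) (j : ℕ) :
    List.ofFn (block n x j) = segment x (j * n) n :=
  ofFn_eq_segment x (j * n) n

theorem segment_prefix_ofFn_iff {n : ℕ} (x : ℕ → α) (a : ℕ) {ℓ : ℕ} (hℓ : ℓ ≤ n)
    (b : Fin n → α) :
    segment x a ℓ <+: List.ofFn b ↔ ∀ k : Fin n, (k : ℕ) < ℓ → b k = x (a + k) := by
  simp only [List.prefix_iff_getElem, segment, List.length_map, List.length_range',
    List.length_ofFn, List.getElem_map, List.getElem_range', List.getElem_ofFn, one_mul, hℓ,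
    exists_true_left]
  exact ⟨fun h k hk => (h k hk).symm, fun h i hi => (h ⟨i, hi.trans_le hℓ⟩ hi).symm⟩

namespace IsSupermultiplicativeWeight

theorem prod_segment_mul_le (hg : IsSupermultiplicativeWeight g) (x : ℕ → α) (n q s : ℕ) :
    (∏ j ∈ Finset.range q, g (segment x (j * n) n)) * g (segment x (q * n) s) ≤
      g (segment x 0 (q * n + s)) := by
  induction q generalizing s with
  | zero => simp
  | succ q ih =>
    have absorb_block : g (segment x (q * n) n) * g (segment x ((q + 1) * n) s) ≤
        g (segment x (q * n) (n + s)) := by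
      rw [← segment_append_segment, ← Nat.succ_mul]
      exact hg.mul_le_append _ _
    calc (∏ j ∈ Finset.range (q + 1), g (segment x (j * n) n)) * g (segment x ((q + 1) * n) s)
        = (∏ j ∈ Finset.range q, g (segment x (j * n) n)) *
            (g (segment x (q * n) n) * g (segment x ((q + 1) * n) s)) := by
          rw [Finset.prod_range_succ, mul_assoc]
      _ ≤ (∏ j ∈ Finset.range q, g (segment x (j * n) n)) * g (segment x (q * n) (n + s)) := by
          gcongr
      _ ≤ g (segment x 0 (q * n + (n + s))) := ih (n + s)
      _ = g (segment x 0 ((q + 1) * n + s)) := by rw [Nat.succ_mul, add_assoc]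

end IsSupermultiplicativeWeight

end Weights

section BlockMeasure

open scoped NNReal ENNReal

variable {α : Type*}

/-- The infinite word over `α` spelled by a sequence of blocks of length `n`. -/
def concatBlocks (n : ℕ) [NeZero n] (y : ℕ → Fin n → α) : ℕ → α :=
  fun i => y (Nat.divModEquiv n i).1 (Nat.divModEquiv n i).2

theorem concatBlocks_preimage_cylinder {n : ℕ} [NeZero n] (x : ℕ → α) (q : ℕ) {s : ℕ}
    (hs : s ≤ n) :
    concatBlocks n ⁻¹' PiNat.cylinder x (q * n + s) =
      Set.pi (Finset.range (q + 1))
        fun j => {b | ∀ k : Fin n, j * n + k < q * n + s → b k = x (j * n + k)} := by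
  ext y
  have block_index_lt {j : ℕ} {k : Fin n} (h : j * n + k < q * n + s) : j < q + 1 := by
    by_contra! hj
    have := Nat.mul_le_mul_right n hj
    rw [Nat.succ_mul] at this
    omega
  rw [Set.mem_preimage, PiNat.mem_cylinder_iff, (Nat.divModEquiv n).forall_congr_left,
    Prod.forall]
  simp only [concatBlocks, Equiv.apply_symm_apply]
  simp only [Nat.divModEquiv_symm_apply]
  exact ⟨fun h j _ k hk => h j k hk,
    fun h j k hk => h j (Finset.mem_range.mpr (block_index_lt hk)) k hk⟩

variable [MeasurableSpace α]

theorem measurable_concatBlocks (n : ℕ) [NeZero n] :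
    Measurable (concatBlocks n : (ℕ → Fin n → α) → ℕ → α) :=
  measurable_pi_lambda _ fun _ => (measurable_pi_apply _).comp (measurable_pi_apply _)

theorem measurableSet_piNat_cylinder [MeasurableSingletonClass α] (x : ℕ → α) (N : ℕ) :
    MeasurableSet (PiNat.cylinder x N) := by
  rw [PiNat.cylinder_eq_pi]
  exact .pi (Finset.countable_toSet _) fun i _ => measurableSet_singleton (x i)

theorem map_concatBlocks_cylinder [Countable α] [MeasurableSingletonClass α] {n : ℕ} [NeZero n]
    (ν : Measure (Fin n → α)) [IsProbabilityMeasure ν] (x : ℕ → α) (q : ℕ) {s : ℕ} (hs : s ≤ n) :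
    (Measure.infinitePi fun _ : ℕ => ν).map (concatBlocks n) (PiNat.cylinder x (q * n + s)) =
      (∏ j ∈ Finset.range q, ν {block n x j}) *
        ν {b | segment x (q * n) s <+: List.ofFn b} := by
  rw [Measure.map_apply (measurable_concatBlocks n) (measurableSet_piNat_cylinder x _),
    concatBlocks_preimage_cylinder x q hs,
    Measure.infinitePi_pi _ fun _ _ => (Set.to_countable _).measurableSet, Finset.prod_range_succ]
  congr 1
  · refine Finset.prod_congr rfl fun j hj => congrArg ν ?_
    have whole_block (k : Fin n) : j * n + k < q * n + s := by
      have := Nat.mul_le_mul_right n (Nat.succ_le_of_lt (Finset.mem_range.mp hj))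
      rw [Nat.succ_mul] at this
      have := k.isLt
      omega
    ext b
    simp only [whole_block, forall_const]
    exact funext_iff.symm
  · simp only [segment_prefix_ofFn_iff x (q * n) hs, add_lt_add_iff_left]

theorem exists_isProbabilityMeasure_singleton_eq_div {ι : Type*} [Fintype ι] [MeasurableSpace ι]
    [MeasurableSingletonClass ι] (w : ι → ℝ≥0) (hw : ∑ i, w i ≠ 0) :
    ∃ ν : Measure ι, IsProbabilityMeasure ν ∧ ∀ i, ν {i} = ↑(w i / ∑ j, w j) := by
  let p : PMF ι := PMF.ofFintype (fun i => ↑(w i / ∑ j, w j)) (by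
    rw [← ENNReal.ofNNReal_finsetSum, ← Finset.sum_div, div_self hw, ENNReal.coe_one])
  exact ⟨p.toMeasure, inferInstance, fun i =>
    p.toMeasure_apply_singleton i (measurableSet_singleton i)⟩

namespace IsSupermultiplicativeWeight

variable {g : List α → ℝ≥0}

theorem exists_measure_extensions_le [Finite α] (hg : IsSupermultiplicativeWeight g) {n : ℕ}
    (ν : Measure (Fin n → α)) [IsProbabilityMeasure ν]
    (hν : ∀ b, g (List.ofFn b) = 0 → ν {b} = 0) :
    ∃ C : ℝ≥0, 0 < C ∧ ∀ u : List α, ν {b | u <+: List.ofFn b} ≤ C * g u := by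
  obtain ⟨C, hC1, hC⟩ := ((List.finite_length_le α n).image fun u => (g u)⁻¹).bddAbove.exists_ge 1
  refine ⟨C, one_pos.trans_le hC1, fun u => ?_⟩
  obtain hun | hun := lt_or_ge n u.length
  · have no_extension : {b : Fin n → α | u <+: List.ofFn b} = ∅ := by
      ext b
      simpa using fun h : u <+: List.ofFn b => (hun.trans_le h.length_le).ne (by simp)
    simp [no_extension]
  obtain hu | hu := eq_or_ne (g u) 0
  · have null : ν {b | u <+: List.ofFn b} = 0 := by
      rw [← Set.biUnion_of_singleton {b : Fin n → α | u <+: List.ofFn b},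
        measure_biUnion_null_iff (Set.to_countable _)]
      rintro b ⟨v, hv⟩
      exact hν b (hv ▸ hg.append_eq_zero u v hu)
    simp [null]
  · have one_le : 1 ≤ C * g u :=
      (inv_le_iff_one_le_mul₀ (pos_iff_ne_zero.mpr hu)).mp (hC _ ⟨u, hun, rfl⟩)
    exact prob_le_one.trans (mod_cast one_le)

theorem map_concatBlocks_cylinder_le [Countable α] [MeasurableSingletonClass α]
    (hg : IsSupermultiplicativeWeight g) {n : ℕ} [NeZero n] (ν : Measure (Fin n → α))
    [IsProbabilityMeasure ν] {S C : ℝ≥0} (hν : ∀ b, ν {b} = ↑(g (List.ofFn b) / S))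
    (hC : ∀ u : List α, ν {b | u <+: List.ofFn b} ≤ C * g u)
    (x : ℕ → α) (q : ℕ) {s : ℕ} (hs : s ≤ n) :
    (Measure.infinitePi fun _ : ℕ => ν).map (concatBlocks n) (PiNat.cylinder x (q * n + s)) ≤
      ↑(C * g (segment x 0 (q * n + s)) * S⁻¹ ^ q) := by
  have prod_blocks : ∏ j ∈ Finset.range q, ν {block n x j} =
      ↑((∏ j ∈ Finset.range q, g (segment x (j * n) n)) * S⁻¹ ^ q) := by
    simp only [hν, ofFn_block, div_eq_mul_inv, ← ENNReal.ofNNReal_finsetProd,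
      Finset.prod_mul_distrib, Finset.prod_const, Finset.card_range]
  rw [map_concatBlocks_cylinder ν x q hs, prod_blocks]
  calc _ ≤ ↑((∏ j ∈ Finset.range q, g (segment x (j * n) n)) * S⁻¹ ^ q) *
          (C * g (segment x (q * n) s) : ℝ≥0∞) := by gcongr; exact hC _
    _ = ↑(C * ((∏ j ∈ Finset.range q, g (segment x (j * n) n)) * g (segment x (q * n) s)) *
          S⁻¹ ^ q) := by push_cast; ring
    _ ≤ _ := by gcongr; exact hg.prod_segment_mul_le x n q s

theorem exists_measure_cylinder_le [Fintype α] [MeasurableSingletonClass α]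
    (hg : IsSupermultiplicativeWeight g) {n : ℕ} (hn : 0 < n)
    (hS : 1 < ∑ b : Fin n → α, g (List.ofFn b)) :
    ∃ (μ : Measure (ℕ → α)) (r C : ℝ≥0), IsProbabilityMeasure μ ∧ 0 < r ∧ r < 1 ∧ 0 < C ∧
      ∀ (x : ℕ → α) (N : ℕ), μ (PiNat.cylinder x N) ≤ ↑(C * g (segment x 0 N) * r ^ N) := by
  have : NeZero n := ⟨hn.ne'⟩
  set S := ∑ b : Fin n → α, g (List.ofFn b)
  have hS0 : 0 < S := one_pos.trans hS
  obtain ⟨ν, _, hν⟩ := exists_isProbabilityMeasure_singleton_eq_div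
    (fun b : Fin n → α => g (List.ofFn b)) hS0.ne'
  obtain ⟨C, hC0, hC⟩ := hg.exists_measure_extensions_le ν fun b hb => by simp [hν, hb]
  obtain ⟨r, hr0, hr1, hrn⟩ : ∃ r : ℝ≥0, 0 < r ∧ r < 1 ∧ r ^ n = S⁻¹ :=
    ⟨S⁻¹ ^ (n⁻¹ : ℝ), NNReal.rpow_pos (inv_pos.mpr hS0),
      NNReal.rpow_lt_one (inv_lt_one_of_one_lt₀ hS) (by positivity),
      NNReal.rpow_inv_natCast_pow _ hn.ne'⟩
  refine ⟨(Measure.infinitePi fun _ : ℕ => ν).map (concatBlocks n), r, C * S,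
    Measure.isProbabilityMeasure_map (measurable_concatBlocks n).aemeasurable, hr0, hr1,
    mul_pos hC0 hS0, fun x N => ?_⟩
  have hN : N / n * n + N % n = N := Nat.div_add_mod' N n
  have pow_blocks_le : S⁻¹ ^ (N / n) ≤ S * r ^ N := by
    calc S⁻¹ ^ (N / n) = S * r ^ (n * (N / n + 1)) := by
          rw [pow_mul, hrn, pow_succ', mul_inv_cancel_left₀ hS0.ne']
      _ ≤ S * r ^ N := by
          gcongr S * ?_
          exact pow_le_pow_of_le_one zero_le hr1.le (Nat.lt_mul_div_succ N hn).le
  calc (Measure.infinitePi fun _ : ℕ => ν).map (concatBlocks n) (PiNat.cylinder x N)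
      ≤ ↑(C * g (segment x 0 N) * S⁻¹ ^ (N / n)) := by
        simpa only [hN] using
          hg.map_concatBlocks_cylinder_le ν hν hC x (N / n) (Nat.mod_lt N hn).le
    _ ≤ ↑(C * g (segment x 0 N) * (S * r ^ N)) := by gcongr
    _ = ↑(C * S * g (segment x 0 N) * r ^ N) := congrArg _ (by ring)

end IsSupermultiplicativeWeight

end BlockMeasure

section MatrixWeight

open scoped NNReal

theorem opNorm_nonneg (A : Matrix (Fin d) (Fin d) ℝ) : 0 ≤ opNorm A :=
  norm_nonneg _

theorem opNorm_mul_le (A B : Matrix (Fin d) (Fin d) ℝ) :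
    opNorm (A * B) ≤ opNorm A * opNorm B := by
  simpa only [opNorm, map_mul] using norm_mul_le _ _

theorem opNorm_eq_zero {A : Matrix (Fin d) (Fin d) ℝ} : opNorm A = 0 ↔ A = 0 := by
  rw [opNorm, norm_eq_zero, EmbeddingLike.map_eq_zero_iff]

theorem alphaMin_nonneg (A : Matrix (Fin d) (Fin d) ℝ) : 0 ≤ alphaMin A :=
  inv_nonneg.mpr (opNorm_nonneg _)

theorem alphaMin_eq_zero {A : Matrix (Fin d) (Fin d) ℝ} : alphaMin A = 0 ↔ A⁻¹ = 0 := by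
  rw [alphaMin, inv_eq_zero, opNorm_eq_zero]

theorem inv_eq_zero_or_inv_eq_zero_of_inv_mul_eq_zero {A B : Matrix (Fin d) (Fin d) ℝ}
    (h : (A * B)⁻¹ = 0) : A⁻¹ = 0 ∨ B⁻¹ = 0 := by
  rw [Matrix.mul_inv_rev] at h
  by_cases hA : IsUnit A.det
  · right
    rw [← Matrix.nonsing_inv_mul_cancel_right A B⁻¹ hA, h, zero_mul]
  · exact .inl (Matrix.nonsing_inv_apply_not_isUnit A hA)

theorem alphaMin_mul_alphaMin_le (A B : Matrix (Fin d) (Fin d) ℝ) :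
    alphaMin A * alphaMin B ≤ alphaMin (A * B) := by
  obtain h | h := eq_or_ne (A * B)⁻¹ 0
  · obtain hA | hB := inv_eq_zero_or_inv_eq_zero_of_inv_mul_eq_zero h
    · simp [alphaMin_eq_zero.mpr hA, alphaMin_nonneg]
    · simp [alphaMin_eq_zero.mpr hB, alphaMin_nonneg]
  · rw [alphaMin, alphaMin, alphaMin, ← mul_inv, mul_comm (opNorm A⁻¹)]
    have : 0 < opNorm (A * B)⁻¹ := (opNorm_nonneg _).lt_of_ne' (opNorm_eq_zero.not.mpr h)
    gcongr
    simpa only [Matrix.mul_inv_rev] using opNorm_mul_le B⁻¹ A⁻¹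

/-- The function `A ↦ α_d(A)^t |det A|` of a matrix, whose value at `T_I` is `g_t(I)`. It takes
values in `ℝ≥0` so that it can serve as a weight on words. A singular `A` has weight `0`
because of the determinant, whatever the junk value of `A⁻¹`. -/
def matrixWeight (t : ℝ) (A : Matrix (Fin d) (Fin d) ℝ) : ℝ≥0 :=
  ⟨alphaMin A ^ t * |A.det|, mul_nonneg (Real.rpow_nonneg (alphaMin_nonneg A) t) (abs_nonneg _)⟩

theorem matrixWeight_mul_matrixWeight_le {t : ℝ} (ht : 0 ≤ t) (A B : Matrix (Fin d) (Fin d) ℝ) :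
    matrixWeight t A * matrixWeight t B ≤ matrixWeight t (A * B) := by
  have rpow_le : alphaMin A ^ t * alphaMin B ^ t ≤ alphaMin (A * B) ^ t := by
    rw [← Real.mul_rpow (alphaMin_nonneg A) (alphaMin_nonneg B)]
    exact Real.rpow_le_rpow (mul_nonneg (alphaMin_nonneg A) (alphaMin_nonneg B))
      (alphaMin_mul_alphaMin_le A B) ht
  rw [← NNReal.coe_le_coe, NNReal.coe_mul]
  calc alphaMin A ^ t * |A.det| * (alphaMin B ^ t * |B.det|)
      = alphaMin A ^ t * alphaMin B ^ t * |(A * B).det| := by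
        rw [Matrix.det_mul, abs_mul]; ring
    _ ≤ alphaMin (A * B) ^ t * |(A * B).det| := by gcongr

theorem matrixWeight_eq_zero {t : ℝ} {A : Matrix (Fin d) (Fin d) ℝ} :
    matrixWeight t A = 0 ↔ (A⁻¹ = 0 ∧ t ≠ 0) ∨ A.det = 0 := by
  rw [← alphaMin_eq_zero, ← Real.rpow_eq_zero_iff_of_nonneg (alphaMin_nonneg A),
    ← abs_eq_zero (a := A.det), ← mul_eq_zero, ← NNReal.coe_eq_zero]
  rfl

theorem matrixWeight_mul_eq_zero {t : ℝ} {A : Matrix (Fin d) (Fin d) ℝ} (hA : matrixWeight t A = 0)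
    (B : Matrix (Fin d) (Fin d) ℝ) : matrixWeight t (A * B) = 0 := by
  rw [matrixWeight_eq_zero] at hA ⊢
  rw [Matrix.mul_inv_rev, Matrix.det_mul]
  exact hA.imp (fun ⟨hinv, ht⟩ => ⟨by rw [hinv, mul_zero], ht⟩)
    (fun hdet => by rw [hdet, zero_mul])

theorem isSupermultiplicativeWeight_matrixWeight {ι : Type*} (T : ι → Matrix (Fin d) (Fin d) ℝ)
    {t : ℝ} (ht : 0 ≤ t) :
    IsSupermultiplicativeWeight fun u : List ι => matrixWeight t (u.map T).prod where
  mul_le_append u v := by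
    simpa only [List.map_append, List.prod_append] using matrixWeight_mul_matrixWeight_le ht _ _
  append_eq_zero u v hu := by
    simpa only [List.map_append, List.prod_append] using matrixWeight_mul_eq_zero hu _

theorem coe_matrixWeight_ofFn (T : Fin m → Matrix (Fin d) (Fin d) ℝ) (t : ℝ) {n : ℕ}
    (I : Fin n → Fin m) : (matrixWeight t ((List.ofFn I).map T).prod : ℝ) = gWord T t I := by
  rw [List.map_ofFn]
  rfl

theorem exists_one_lt_sum_gWord (T : Fin m → Matrix (Fin d) (Fin d) ℝ) {t : ℝ} (ht : 0 ≤ t)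
    (htT : t < tParam T) : ∃ n : ℕ, 0 < n ∧ 1 < ∑ I : Fin n → Fin m, gWord T t I := by
  by_contra! h
  exact htT.not_ge (csInf_le ⟨0, fun _ hs => hs.1⟩ ⟨ht, h⟩)

end MatrixWeight

theorem cylinder_eq_empty_or_eq_piNat_cylinder {n : ℕ} (I : Fin n → Fin m) :
    cylinder I = ∅ ∨ ∃ x : ℕ → Fin m, List.ofFn I = segment x 0 n ∧
      cylinder I = PiNat.cylinder x n := by
  refine (cylinder I).eq_empty_or_nonempty.imp_right ?_
  rintro ⟨x, hx⟩
  obtain rfl : I = fun k : Fin n => x k := funext fun k => (hx k).symm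
  refine ⟨x, by simpa only [zero_add] using ofFn_eq_segment x 0 n, ?_⟩
  ext y
  exact Fin.forall_iff

theorem exists_measure_cylinder_le_gWord_general (T : Fin m → Matrix (Fin d) (Fin d) ℝ) (t : ℝ)
    (ht : 0 ≤ t) (htT : t < tParam T) :
    ∃ (μ : Measure (ℕ → Fin m)) (r C : ℝ), IsProbabilityMeasure μ ∧
      0 < r ∧ r < 1 ∧ 0 < C ∧
      ∀ (n : ℕ) (I : Fin n → Fin m),
        μ (cylinder I) ≤ ENNReal.ofReal (C * gWord T t I * r ^ n) := by
  obtain ⟨n, hn, hS⟩ := exists_one_lt_sum_gWord T ht htT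
  simp only [← coe_matrixWeight_ofFn] at hS
  obtain ⟨μ, r, C, hμ, hr0, hr1, hC0, hle⟩ :=
    (isSupermultiplicativeWeight_matrixWeight T ht).exists_measure_cylinder_le hn (mod_cast hS)
  refine ⟨μ, r, C, hμ, hr0, hr1, hC0, fun N I => ?_⟩
  obtain hI | ⟨x, hIx, hI⟩ := cylinder_eq_empty_or_eq_piNat_cylinder I
  · simp [hI]
  · rw [hI, ← coe_matrixWeight_ofFn, hIx]
    simpa only [← NNReal.coe_mul, ← NNReal.coe_pow, ENNReal.ofReal_coe_nnreal] using hle x N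

/-- **Lemma 4.2.** Suppose `t(T_1,…,T_m) > d`. Then for every `t` with
`d < t < t(T_1,…,T_m)` there exist a Borel probability measure `μ` on `Σ`, a number
`r ∈ (0,1)` and a constant `C > 0` such that `μ([I]) ≤ C g_t(I) r^{|I|}` for every
finite word `I`. -/
theorem exists_measure_cylinder_le_gWord
    (T : Fin m → Matrix (Fin d) (Fin d) ℝ)
    (hinv : ∀ i, IsUnit (T i).det)
    (t : ℝ) (hdt : (d : ℝ) < t) (htt : t < tParam T) :
    ∃ (μ : Measure (ℕ → Fin m)) (r C : ℝ), IsProbabilityMeasure μ ∧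
      0 < r ∧ r < 1 ∧ 0 < C ∧
      ∀ (n : ℕ) (I : Fin n → Fin m),
        μ (cylinder I) ≤ ENNReal.ofReal (C * gWord T t I * r ^ n) :=
  exists_measure_cylinder_le_gWord_general T t (d.cast_nonneg.trans hdt.le) htt

end SelfAffine
end
end

section
/- Let T_1,…,T_m be pairwise commuting invertible d×d real matrices with Σ_{i=1}^m |det(T_i)|^2 > 1. Then there exist a real number t > 2, a positive integer N, and a d×d matrix A ∈ { T_I : I ∈ Σ_N } such that #{ I ∈ Σ_N : T_I = A } · |det(A)|^t > 1. -/
open MeasureTheory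

noncomputable section

namespace SelfAffine

variable {d m : ℕ}

/-!
Expanding `(∑ i, |det T_i|²) ^ N` gives the sum of `|det T_I|²` over all words `I` of length `N`.
By commutativity `T_I` depends only on how often each letter occurs in `I`, so at most
`(N + 1) ^ m` matrices occur as `T_I`. This is polynomial in `N` while the sum grows
exponentially, so for large `N` some matrix `A` contributes more than `1`, that is
`#{I | T_I = A} * |det A|² > 1`. The inequality is strict and the left-hand side is continuous
in the exponent, so the exponent can be raised slightly above `2`.
-/

section CommutingFamily

open Filter Finset
open scoped NNReal Topology

lemma eventually_natCast_add_one_pow_lt_pow {S : ℝ} (hS : 1 < S) (k : ℕ) :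
    ∀ᶠ N : ℕ in atTop, ((N : ℝ) + 1) ^ k < S ^ N := by
  have hS_pos : 0 < S := one_pos.trans hS
  have ratio_tendsto : Tendsto (fun N : ℕ ↦ ((N + 1 : ℕ) : ℝ) ^ k / S ^ (N + 1)) atTop (𝓝 0) :=
    (tendsto_add_atTop_iff_nat 1).2 (tendsto_pow_const_div_const_pow_of_one_lt k hS)
  filter_upwards [ratio_tendsto.eventually_lt_const (inv_pos.2 hS_pos)] with N hN
  rwa [div_lt_iff₀ (pow_pos hS_pos _), pow_succ', inv_mul_cancel_left₀ hS_pos.ne',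
    Nat.cast_add_one] at hN

lemma exists_gt_lt_mul_rpow {a b c : ℝ≥0} {s : ℝ} (hs : s ≠ 0) (h : b < c * a ^ s) :
    ∃ t > s, b < c * a ^ t := by
  have ha : a ≠ 0 := by
    rintro rfl
    simp [hs] at h
  have mul_rpow_continuousAt : ContinuousAt (fun t : ℝ ↦ c * a ^ t) s :=
    continuousAt_const.mul (continuousAt_const.nnrpow continuousAt_id (.inl ha))
  exact (mul_rpow_continuousAt.eventually_const_lt h).exists_gt

variable {ι M : Type*} [Monoid M]

lemma prod_ofFn_comp_eq_of_count_eq [DecidableEq ι] {x : ι → M}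
    (hx : ∀ i j, Commute (x i) (x j)) {N : ℕ} {I J : Fin N → ι}
    (h : ∀ i, (List.ofFn I).count i = (List.ofFn J).count i) :
    (List.ofFn (x ∘ I)).prod = (List.ofFn (x ∘ J)).prod := by
  rw [← List.map_ofFn, ← List.map_ofFn]
  refine ((List.perm_iff_count.2 h).map x).prod_eq' (List.pairwise_map.2 ?_)
  exact List.pairwise_of_forall hx

variable [Fintype ι]

lemma card_image_prod_ofFn_comp_le [DecidableEq M] {x : ι → M}
    (hx : ∀ i j, Commute (x i) (x j)) (N : ℕ) :
    #(univ.image fun I : Fin N → ι ↦ (List.ofFn (x ∘ I)).prod) ≤ (N + 1) ^ Fintype.card ι := by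
  classical
  let letterCount (I : Fin N → ι) (i : ι) : ℕ := (List.ofFn I).count i
  let letterCounts : Finset (ι → ℕ) := Fintype.piFinset fun _ ↦ range (N + 1)
  have letterCount_mem (I : Fin N → ι) : letterCount I ∈ letterCounts :=
    Fintype.mem_piFinset.2 fun i ↦ mem_range_succ_iff.2 <|
      List.count_le_length.trans_eq List.length_ofFn
  calc
    _ ≤ #letterCounts := by
      refine card_le_card_of_forall_subsingleton
        (fun A c ↦ ∃ I, (List.ofFn (x ∘ I)).prod = A ∧ letterCount I = c) ?_ ?_
      · intro A hA
        obtain ⟨I, -, hI⟩ := mem_image.1 hA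
        exact ⟨letterCount I, letterCount_mem I, I, hI, rfl⟩
      · rintro c - A ⟨-, I, rfl, hI⟩ B ⟨-, J, rfl, hJ⟩
        exact prod_ofFn_comp_eq_of_count_eq hx (congrFun (hI.trans hJ.symm))
    _ = (N + 1) ^ Fintype.card ι := by simp [letterCounts]

lemma sum_map_prod_ofFn_comp {R : Type*} [CommSemiring R] (f : M →* R) (x : ι → M) (N : ℕ) :
    ∑ I : Fin N → ι, f (List.ofFn (x ∘ I)).prod = (∑ i, f (x i)) ^ N := by
  simp only [Fintype.sum_pow, map_list_prod, List.map_ofFn, List.prod_ofFn, Function.comp_apply]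

lemma exists_one_lt_card_mul_map_prod_ofFn {x : ι → M} (hx : ∀ i j, Commute (x i) (x j))
    (f : M →* ℝ) (hsum : 1 < ∑ i, f (x i)) :
    ∃ N > 0, ∃ I : Fin N → ι,
      1 < (Nat.card {J : Fin N → ι // (List.ofFn (x ∘ J)).prod = (List.ofFn (x ∘ I)).prod} : ℝ) *
        f (List.ofFn (x ∘ I)).prod := by
  classical
  obtain ⟨N, hN, hN_pos⟩ := ((eventually_natCast_add_one_pow_lt_pow hsum (Fintype.card ι)).and
    (eventually_gt_atTop 0)).exists
  let wordValue (I : Fin N → ι) : M := (List.ofFn (x ∘ I)).prod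
  have card_lt_sum : #(univ.image wordValue) • (1 : ℝ) < ∑ I, f (wordValue I) := calc
    #(univ.image wordValue) • (1 : ℝ) ≤ ((N : ℝ) + 1) ^ Fintype.card ι := by
      rw [nsmul_one]
      exact_mod_cast card_image_prod_ofFn_comp_le hx N
    _ < (∑ i, f (x i)) ^ N := hN
    _ = ∑ I, f (wordValue I) := (sum_map_prod_ofFn_comp f x N).symm
  obtain ⟨A, hA, one_lt_fiber_sum⟩ := exists_lt_sum_fiber_of_maps_to_of_nsmul_lt_sum
    (fun I hI ↦ mem_image_of_mem wordValue hI) card_lt_sum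
  obtain ⟨I, -, rfl⟩ := mem_image.1 hA
  refine ⟨N, hN_pos, I, one_lt_fiber_sum.trans_eq ?_⟩
  calc
    ∑ J with wordValue J = wordValue I, f (wordValue J)
      = #{J | wordValue J = wordValue I} • f (wordValue I) :=
        sum_eq_card_nsmul fun J hJ ↦ congrArg f (mem_filter.1 hJ).2
    _ = (Nat.card {J // wordValue J = wordValue I} : ℝ) * f (wordValue I) := by
      rw [nsmul_eq_mul, Nat.card_eq_fintype_card, Fintype.card_subtype]

theorem exists_word_class_card_mul_det_rpow_gt_one_general {x : ι → M}
    (hx : ∀ i j, Commute (x i) (x j)) (φ : M →* ℝ≥0) {s : ℝ} (hs : 0 < s)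
    (hsum : 1 < ∑ i, φ (x i) ^ s) :
    ∃ (t : ℝ) (N : ℕ) (A : M), s < t ∧ 0 < N ∧
      (∃ I : Fin N → ι, (List.ofFn (x ∘ I)).prod = A) ∧
      1 < (Nat.card {I : Fin N → ι // (List.ofFn (x ∘ I)).prod = A} : ℝ≥0) * φ A ^ t := by
  let f : M →* ℝ := NNReal.toRealHom.toMonoidHom.comp ((NNReal.rpowMonoidHom s).comp φ)
  have coe_rpow (a : M) : f a = (φ a ^ s : ℝ≥0) := rfl
  have one_lt_sum : 1 < ∑ i, f (x i) := by
    simp only [coe_rpow]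
    exact_mod_cast hsum
  obtain ⟨N, hN, I, hI⟩ := exists_one_lt_card_mul_map_prod_ofFn hx f one_lt_sum
  rw [coe_rpow] at hI
  obtain ⟨t, hst, ht⟩ := exists_gt_lt_mul_rpow hs.ne' (mod_cast hI)
  exact ⟨t, N, _, hst, hN, ⟨I, rfl⟩, ht⟩

end CommutingFamily

/-- **Estimate (5.3).** If the `T_i` pairwise commute, are invertible and
`∑_i |det T_i|² > 1`, then there exist `t > 2`, a positive integer `N` and a matrix
`A ∈ { T_I : I ∈ Σ_N }` such that `#{ I ∈ Σ_N : T_I = A } · |det A|^t > 1`. -/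
theorem exists_word_class_card_mul_det_rpow_gt_one
    (T : Fin m → Matrix (Fin d) (Fin d) ℝ)
    (hinv : ∀ i, IsUnit (T i).det)
    (hcomm : ∀ i j, T i * T j = T j * T i)
    (hsum : 1 < ∑ i : Fin m, |(T i).det| ^ 2) :
    ∃ (t : ℝ) (N : ℕ) (A : Matrix (Fin d) (Fin d) ℝ), 2 < t ∧ 0 < N ∧
      (∃ I : Fin N → Fin m, wordProd T I = A) ∧
      1 < (Nat.card { I : Fin N → Fin m // wordProd T I = A } : ℝ) * |A.det| ^ t := by
  simpa [← NNReal.coe_lt_coe] using! exists_word_class_card_mul_det_rpow_gt_one_general hcomm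
    (nnnormHom.toMonoidHom.comp Matrix.detMonoidHom) two_pos
    (by simpa [← NNReal.coe_lt_coe] using hsum)

end SelfAffine
end
end
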